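/- Fix x₀ ∈ [0,1] and L ∈ ℝ. Let (δ_k) be a sequence of positive reals with δ_k → 0 and (N_k) a sequence of positive integers with N_k → ∞ such that there is a constant c > 0 with N_k·δ_k ≥ c for all k. Then lim_{k→∞} (1/N_k)·#{ j ∈ {1, …, N_k} : log q_min(x₀ + j/N_k, δ_k) > L − (1/2)·log δ_k } = ∫_L^∞ η_log(s) ds. -/

import Mathlib

open MeasureTheory Filter
open scoped Classical

/-- The limiting density of the logarithm of smallest denominators. -/
noncomputable def etaLog (s : ℝ) : ℝ :=
  if s ≤ 0 then 6 / Real.pi ^ 2 * Real.exp (2 * s)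
  else if s ≤ Real.log 2 then 6 / Real.pi ^ 2 * (-Real.exp (2 * s) + 2 + 4 * s)
  else 6 / Real.pi ^ 2 * (-Real.exp (2 * s) + 2
    + 2 * Real.exp (2 * s) * Real.sqrt (1 / 4 - Real.exp (-2 * s))
    - 4 * Real.log (1 / 2 + Real.sqrt (1 / 4 - Real.exp (-2 * s))))

/-- The smallest denominator of all rationals in the interval `(x - δ/2, x + δ/2)`. -/
noncomputable def qmin (x δ : ℝ) : ℕ :=
  sInf {q : ℕ | 0 < q ∧ ∃ p : ℤ, x - δ / 2 < (p : ℝ) / q ∧ (p : ℝ) / q < x + δ / 2}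

/-!
With `n = ⌊exp L / √δ⌋`, the condition `L - log δ / 2 < log (qmin x δ)` says that the interval of
length `δ` centred at `x` contains no fraction with denominator at most `n`. Equivalently, `x` lies
in the core left after removing `δ / 2` from both ends of a gap between two consecutive such
fractions. The gaps modulo `1` correspond to the coprime pairs `(a, b)` with `a, b ≤ n < a + b`, the
gap of `(a, b)` having length `1 / (a b)`, so the proportion of `j` is the sum of
`1 / (a b) - δ` over the pairs with `a b δ ≤ 1`, up to the error made in replacing, gap by gap,
the number of points `x₀ + j / N` in a core by `N` times its length.

The error is an average of sawtooth functions at the endpoints of the cores, that is at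
`N b⁻¹ / a + θ` with `b⁻¹` the inverse of `b` modulo `a`. Since `n ^ 2 = O(N)` only, it has to be
shown that these points are equidistributed. By Weyl's criterion this follows from cancellation in
the incomplete Kloosterman sums `∑ e(h N b⁻¹ / a)`, where `b` runs over an interval, on average over
`a ≤ n`; Kloosterman's fourth moment bound, of exponent `3 / 4`, suffices.

In the main term, `1 / (a b) - δ` is the integral of `2 exp(2 s) / n ^ 2` over the `s > L` with
`a b exp(2 s) ≤ n ^ 2`, up to the rounding in `n`. Hence the main term is a tail integral of
`2 exp(2 s)` times the normalised number of pairs with `a b exp(2 s) ≤ n ^ 2`. That number tends to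
`6 / π ^ 2` times the area of a plane region, which evaluates to `etaLog`, and it is
`O(exp(-4 s))`, so that dominated convergence applies.
-/

open scoped ComplexConjugate FourierTransform Topology

section Orthogonality

variable {R ι : Type*} [CommRing R] [Fintype R] [Fintype ι] {ψ : AddChar R ℂ}

lemma sum_norm_sq_sum_mul_addChar [DecidableEq R] (hψ : ψ.IsPrimitive) (c : ι → ℂ) (y : ι → R) :
    ((∑ b, ‖∑ i, c i * ψ (b * y i)‖ ^ 2 : ℝ) : ℂ) =
      Fintype.card R * ∑ i, ∑ j, if y i = y j then c i * conj (c j) else 0 := by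
  have expand (b : R) : ((‖∑ i, c i * ψ (b * y i)‖ ^ 2 : ℝ) : ℂ) =
      ∑ i, ∑ j, c i * conj (c j) * ψ (b * (y i - y j)) := by
    rw [← Complex.normSq_eq_norm_sq, ← Complex.mul_conj, map_sum, Finset.sum_mul_sum]
    refine Finset.sum_congr rfl fun i _ ↦ Finset.sum_congr rfl fun j _ ↦ ?_
    rw [map_mul (starRingEnd ℂ), ← AddChar.map_neg_eq_conj, mul_mul_mul_comm,
      ← AddChar.map_add_eq_mul]
    congr 2
    ring
  rw [Complex.ofReal_sum, Finset.sum_congr rfl fun b _ ↦ expand b, Finset.sum_comm,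
    Finset.mul_sum]
  refine Finset.sum_congr rfl fun i _ ↦ ?_
  rw [Finset.sum_comm, Finset.mul_sum]
  refine Finset.sum_congr rfl fun j _ ↦ ?_
  rw [← Finset.mul_sum, AddChar.sum_mulShift _ hψ]
  simp only [sub_eq_zero]
  split_ifs <;> push_cast <;> ring

lemma sum_norm_sq_sum_addChar (hψ : ψ.IsPrimitive) (A : Finset R) :
    ∑ b, ‖∑ x ∈ A, ψ (b * x)‖ ^ 2 = (Fintype.card R : ℝ) * A.card := by
  have h := sum_norm_sq_sum_mul_addChar hψ (fun _ : A ↦ 1) (fun x ↦ (x : R))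
  simp only [one_mul, map_one, Subtype.coe_inj, Finset.sum_ite_eq, Finset.mem_univ, if_true,
    Finset.sum_const, Finset.card_univ, Fintype.card_coe, nsmul_one] at h
  have hcoe (b : R) : ∑ x : A, ψ (b * x) = ∑ x ∈ A, ψ (b * x) :=
    Finset.sum_coe_sort A fun x ↦ ψ (b * x)
  simp only [hcoe] at h
  exact_mod_cast h

lemma sum_sum_norm_sq_sum_addChar [DecidableEq R] (hψ : ψ.IsPrimitive) (x y : ι → R) :
    ∑ a, ∑ b, ‖∑ i, ψ (a * x i + b * y i)‖ ^ 2 = (Fintype.card R : ℝ) ^ 2 *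
      (Finset.univ.filter fun p : ι × ι ↦ x p.1 = x p.2 ∧ y p.1 = y p.2).card := by
  have inner (a : R) : ((∑ b, ‖∑ i, ψ (a * x i + b * y i)‖ ^ 2 : ℝ) : ℂ) =
      Fintype.card R * ∑ i, ∑ j, if y i = y j then ψ (a * (x i - x j)) else 0 := by
    simp only [AddChar.map_add_eq_mul]
    rw [sum_norm_sq_sum_mul_addChar hψ]
    simp only [← AddChar.map_neg_eq_conj, ← AddChar.map_add_eq_mul, ← mul_neg, ← mul_add,
      sub_eq_add_neg]
  have outer (i j : ι) : (∑ a, if y i = y j then ψ (a * (x i - x j)) else 0) =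
      Fintype.card R * if x i = x j ∧ y i = y j then 1 else 0 := by
    by_cases hy : y i = y j
    · simp [hy, AddChar.sum_mulShift _ hψ, sub_eq_zero]
    · simp [hy]
  have key : ((∑ a, ∑ b, ‖∑ i, ψ (a * x i + b * y i)‖ ^ 2 : ℝ) : ℂ) = (Fintype.card R : ℂ) ^ 2 *
      (Finset.univ.filter fun p : ι × ι ↦ x p.1 = x p.2 ∧ y p.1 = y p.2).card := by
    rw [Complex.ofReal_sum, Finset.sum_congr rfl fun a _ ↦ inner a, ← Finset.mul_sum,
      Finset.sum_comm, Finset.natCast_card_filter, Fintype.sum_prod_type, pow_two, mul_assoc]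
    congr 1
    rw [Finset.mul_sum]
    refine Finset.sum_congr rfl fun i _ ↦ ?_
    rw [Finset.sum_comm, Finset.mul_sum]
    exact Finset.sum_congr rfl fun j _ ↦ outer i j
  exact_mod_cast key

end Orthogonality

section Divisors

lemma sum_gcd_Icc_le (m n : ℕ) (hm : 0 < m) :
    ∑ q ∈ Finset.Icc 1 n, Nat.gcd m q ≤ n * m.divisors.card := by
  calc ∑ q ∈ Finset.Icc 1 n, Nat.gcd m q
      ≤ ∑ q ∈ Finset.Icc 1 n, ∑ d ∈ m.divisors, if d ∣ q then d else 0 := by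
        refine Finset.sum_le_sum fun q _ ↦ ?_
        have hmem : Nat.gcd m q ∈ m.divisors := Nat.mem_divisors.2 ⟨Nat.gcd_dvd_left m q, hm.ne'⟩
        simpa [Nat.gcd_dvd_right] using Finset.single_le_sum
          (f := fun d ↦ if d ∣ q then d else 0) (fun _ _ ↦ Nat.zero_le _) hmem
    _ = ∑ d ∈ m.divisors, n / d * d := by
        rw [Finset.sum_comm]
        refine Finset.sum_congr rfl fun d _ ↦ ?_
        rw [← Finset.sum_filter, Finset.sum_const, smul_eq_mul, ← Nat.Ioc_filter_dvd_card_eq_div]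
        rfl
    _ ≤ ∑ _d ∈ m.divisors, n := Finset.sum_le_sum fun d _ ↦ Nat.div_mul_le_self n d
    _ = n * m.divisors.card := by rw [Finset.sum_const, smul_eq_mul, mul_comm]

lemma le_totient_mul_card_divisors (q : ℕ) : q ≤ q.totient * q.divisors.card := by
  calc q = ∑ d ∈ q.divisors, d.totient := (Nat.sum_totient q).symm
    _ ≤ ∑ _d ∈ q.divisors, q.totient := Finset.sum_le_sum fun d hd ↦
        Nat.le_of_dvd (Nat.totient_pos.2 (Nat.pos_of_mem_divisors (n := q) (Nat.mem_divisors_self q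
          (Nat.mem_divisors.1 hd).2)))
          (Nat.totient_dvd_of_dvd (Nat.dvd_of_mem_divisors hd))
    _ = q.totient * q.divisors.card := by rw [Finset.sum_const, smul_eq_mul, mul_comm]

lemma exists_forall_add_one_le_mul_two_rpow {ε : ℝ} (hε : 0 < ε) :
    ∃ C : ℝ, 1 ≤ C ∧ ∀ e : ℕ, (e + 1 : ℝ) ≤ C * ((2 : ℝ) ^ e) ^ ε := by
  set c := ε * Real.log 2
  have hc : 0 < c := mul_pos hε (Real.log_pos one_lt_two)
  refine ⟨1 + 1 / c, by simp [hc.le], fun e ↦ ?_⟩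
  have hexp : ((2 : ℝ) ^ e) ^ ε = Real.exp (c * e) := by
    rw [← Real.rpow_natCast, ← Real.rpow_mul two_pos.le, Real.rpow_def_of_pos two_pos]
    congr 1
    ring
  calc (e + 1 : ℝ) ≤ (1 + 1 / c) * (c * e + 1) := by
        have : (1 + 1 / c) * (c * e + 1) = e + 1 + (c * e + 1 / c) := by field_simp; ring
        rw [this]
        exact le_add_of_nonneg_right (by positivity)
    _ ≤ (1 + 1 / c) * ((2 : ℝ) ^ e) ^ ε := by
        rw [hexp]
        gcongr
        exact Real.add_one_le_exp _

/-- A prime power `p ^ e` with `2 ≤ p ^ ε` contributes at most `(p ^ e) ^ ε`; the finitely many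
smaller primes each cost a constant factor. -/
lemma exists_forall_card_divisors_le_rpow {ε : ℝ} (hε : 0 < ε) :
    ∃ C : ℝ, 0 < C ∧ ∀ n : ℕ, (n.divisors.card : ℝ) ≤ C * (n : ℝ) ^ ε := by
  obtain ⟨C, hC1, hC⟩ := exists_forall_add_one_le_mul_two_rpow hε
  set B := ⌈(2 : ℝ) ^ (1 / ε)⌉₊
  refine ⟨C ^ B, by positivity, fun n ↦ ?_⟩
  rcases eq_or_ne n 0 with rfl | hn
  · simp [hε.ne']
  have hlocal : ∀ p ∈ n.primeFactors, ((n.factorization p + 1 : ℕ) : ℝ) ≤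
      (if p < B then C else 1) * ((p ^ n.factorization p : ℕ) : ℝ) ^ ε := by
    intro p hp
    have hp2 : (2 : ℝ) ≤ p := by exact_mod_cast (Nat.prime_of_mem_primeFactors hp).two_le
    push_cast
    split_ifs with hpB
    · exact (hC _).trans (by gcongr)
    · have hpε : (2 : ℝ) ≤ (p : ℝ) ^ ε := by
        have := Real.rpow_le_rpow (by positivity) (Nat.ceil_le.1 (not_lt.1 hpB)) hε.le
        rwa [← Real.rpow_mul two_pos.le, one_div_mul_cancel hε.ne', Real.rpow_one] at this
      rw [one_mul, ← Real.rpow_natCast, ← Real.rpow_mul (by positivity), mul_comm,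
        Real.rpow_mul (by positivity), Real.rpow_natCast]
      calc (n.factorization p + 1 : ℝ) ≤ 2 ^ n.factorization p := by
            exact_mod_cast Nat.lt_two_pow_self
        _ ≤ ((p : ℝ) ^ ε) ^ n.factorization p := by gcongr
  have hsmall : (n.primeFactors.filter (· < B)).card ≤ B :=
    (Finset.card_le_card fun p hp ↦ Finset.mem_range.2 (Finset.mem_filter.1 hp).2).trans
      (Finset.card_range B).le
  calc (n.divisors.card : ℝ) = ∏ p ∈ n.primeFactors, ((n.factorization p + 1 : ℕ) : ℝ) := by
        rw [Nat.card_divisors hn, Nat.cast_prod]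
    _ ≤ ∏ p ∈ n.primeFactors, (if p < B then C else 1) * ((p ^ n.factorization p : ℕ) : ℝ) ^ ε :=
        Finset.prod_le_prod (fun _ _ ↦ Nat.cast_nonneg _) hlocal
    _ = C ^ (n.primeFactors.filter (· < B)).card * (n : ℝ) ^ ε := by
        rw [Finset.prod_mul_distrib, ← Finset.prod_filter, Finset.prod_const,
          Real.finsetProd_rpow _ _ fun _ _ ↦ Nat.cast_nonneg _, ← Nat.cast_prod]
        congr 3
        exact Nat.prod_factorization_pow_eq_self hn
    _ ≤ C ^ B * (n : ℝ) ^ ε := by gcongr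

end Divisors

section ZModCounting

variable {q : ℕ} [NeZero q]

lemma card_filter_natCast_mul_eq_le (k : ℕ) (z : ZMod q) :
    (Finset.univ.filter fun w : ZMod q ↦ (k : ZMod q) * w = z).card ≤ Nat.gcd k q := by
  by_cases hsol : ∃ w₀ : ZMod q, (k : ZMod q) * w₀ = z
  · obtain ⟨w₀, rfl⟩ := hsol
    refine le_trans ?_ (IsAddCyclic.card_nsmul_eq_zero_le (α := ZMod q)
      (Nat.gcd_pos_of_pos_right k (NeZero.pos q)))
    refine Finset.card_le_card_of_injOn (· - w₀) (fun w hw ↦ ?_)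
      fun _ _ _ _ h ↦ sub_left_injective h
    simp only [Finset.coe_filter, Finset.mem_univ, true_and, Set.mem_ofPred_eq] at hw ⊢
    have hk : q ∣ k * (w - w₀).val := by
      rw [← ZMod.natCast_eq_zero_iff, Nat.cast_mul, ZMod.natCast_zmod_val, mul_sub, hw, sub_self]
    have hgcd : q ∣ Nat.gcd k q * (w - w₀).val := by
      rw [← Nat.gcd_mul_right]
      exact Nat.dvd_gcd hk (Dvd.intro _ rfl)
    rwa [← ZMod.natCast_eq_zero_iff, Nat.cast_mul, ZMod.natCast_zmod_val, ← nsmul_eq_mul] at hgcd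
  · push Not at hsol
    simp [Finset.filter_false_of_mem fun w _ ↦ hsol w]

lemma card_filter_mul_eq_le (a z : ZMod q) :
    (Finset.univ.filter fun w ↦ a * w = z).card ≤ Nat.gcd a.val q := by
  simpa using card_filter_natCast_mul_eq_le a.val z

lemma sum_gcd_val_le : ∑ x : ZMod q, Nat.gcd x.val q ≤ q * q.divisors.card := by
  refine le_trans (le_of_eq ?_) (sum_gcd_Icc_le q q (NeZero.pos q))
  obtain ⟨n, rfl⟩ := Nat.exists_eq_succ_of_ne_zero (NeZero.ne q)
  rw [show ∑ x : ZMod (n + 1), Nat.gcd x.val (n + 1) = ∑ i ∈ Finset.range (n + 1), i.gcd (n + 1)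
    from Fin.sum_univ_eq_sum_range (fun i ↦ Nat.gcd i (n + 1)) (n + 1), Finset.sum_range_succ',
    Finset.range_eq_Ico, Finset.sum_Ico_add' (fun i ↦ Nat.gcd i (n + 1)), zero_add,
    Finset.Ico_add_one_right_eq_Icc, Finset.sum_Icc_succ_top (by lia), Nat.gcd_zero_left,
    Nat.gcd_self]
  simp only [Nat.gcd_comm]

end ZModCounting

section Kloosterman

variable {q : ℕ} [NeZero q]

lemma card_filter_mul_mul_eq_zero_le :
    (Finset.univ.filter fun p : ZMod q × ZMod q × ZMod q ↦ p.1 * p.2.1 * p.2.2 = 0).card ≤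
      (q * q.divisors.card) ^ 2 := by
  calc (Finset.univ.filter fun p : ZMod q × ZMod q × ZMod q ↦ p.1 * p.2.1 * p.2.2 = 0).card
      = ∑ x : ZMod q, ∑ y : ZMod q, (Finset.univ.filter fun z ↦ x * y * z = 0).card := by
        simp only [Finset.card_filter, Fintype.sum_prod_type]
    _ ≤ ∑ x : ZMod q, ∑ y : ZMod q, Nat.gcd x.val q * Nat.gcd y.val q := by
        refine Finset.sum_le_sum fun x _ ↦ Finset.sum_le_sum fun y _ ↦ ?_
        calc (Finset.univ.filter fun z ↦ x * y * z = 0).card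
            ≤ Nat.gcd (x * y).val q := card_filter_mul_eq_le (x * y) 0
          _ = Nat.gcd (x.val * y.val) q := by rw [ZMod.val_mul, (Nat.mod_modEq _ q).gcd_eq]
          _ ≤ Nat.gcd x.val q * Nat.gcd y.val q :=
              Nat.le_of_dvd (Nat.mul_pos (Nat.gcd_pos_of_pos_right _ (NeZero.pos q))
                (Nat.gcd_pos_of_pos_right _ (NeZero.pos q))) (Nat.gcd_mul_left_dvd_mul_gcd _ _ _)
    _ = (∑ x : ZMod q, Nat.gcd x.val q) ^ 2 := by rw [pow_two, Finset.sum_mul_sum]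
    _ ≤ (q * q.divisors.card) ^ 2 := Nat.pow_le_pow_left sum_gcd_val_le 2

lemma mul_sub_mul_sub_eq_zero_of_units {R : Type*} [CommRing R] {a b c d : Rˣ}
    (hinv : (↑a⁻¹ + ↑b⁻¹ : R) = ↑c⁻¹ + ↑d⁻¹) (hadd : (a + b : R) = c + d) :
    (a + b : R) * (a - c) * (b - c) = 0 := by
  have hprod : (a + b : R) * (c * d) = (c + d) * (a * b) := by
    linear_combination (a * b * c * d : R) * hinv - (b * c * d : R) * a.mul_inv -
      (a * c * d : R) * b.mul_inv + (a * b * d : R) * c.mul_inv + (a * b * c : R) * d.mul_inv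
  linear_combination -hprod + (-(a + b : R) * c + a * b) * hadd

lemma card_add_eq_add_and_inv_add_inv_eq_le :
    (Finset.univ.filter fun p : ((ZMod q)ˣ × (ZMod q)ˣ) × ((ZMod q)ˣ × (ZMod q)ˣ) ↦
      (↑p.1.1⁻¹ + ↑p.1.2⁻¹ : ZMod q) = ↑p.2.1⁻¹ + ↑p.2.2⁻¹ ∧
      (p.1.1 + p.1.2 : ZMod q) = p.2.1 + p.2.2).card ≤ 2 * (q * q.divisors.card) ^ 2 := by
  let f (p : ((ZMod q)ˣ × (ZMod q)ˣ) × ((ZMod q)ˣ × (ZMod q)ˣ)) : ZMod q × ZMod q × ZMod q :=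
    (p.1.1 + p.1.2, p.1.1 - p.2.1, p.1.2 - p.2.1)
  refine (Finset.card_le_mul_card_image_of_maps_to (f := f)
    (t := Finset.univ.filter fun p ↦ p.1 * p.2.1 * p.2.2 = 0) (fun p hp ↦ ?_) 2 ?_).trans
    (Nat.mul_le_mul_left 2 card_filter_mul_mul_eq_zero_le)
  · simp only [Finset.mem_filter, Finset.mem_univ, true_and] at hp ⊢
    exact mul_sub_mul_sub_eq_zero_of_units hp.1 hp.2
  -- On a fibre of `f` the whole quadruple is determined by its first entry, whose double is known.
  rintro ⟨x, y, z⟩ -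
  refine le_trans (Finset.card_le_card_of_injOn (fun p ↦ (p.1.1 : ZMod q))
    (t := Finset.univ.filter fun w ↦ ((2 : ℕ) : ZMod q) * w = x + y - z) ?_ ?_)
    ((card_filter_natCast_mul_eq_le 2 _).trans (Nat.gcd_le_left _ two_pos))
  · rintro ⟨⟨a, b⟩, ⟨c, d⟩⟩ hp
    simp only [f, Finset.coe_filter, Finset.mem_univ, true_and, Set.mem_ofPred_eq,
      Prod.mk.injEq] at hp ⊢
    obtain ⟨-, rfl, rfl, rfl⟩ := hp
    push_cast
    ring
  · rintro ⟨⟨a, b⟩, ⟨c, d⟩⟩ hp ⟨⟨a', b'⟩, ⟨c', d'⟩⟩ hp' (haa' : (a : ZMod q) = a')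
    simp only [f, Finset.coe_filter, Finset.mem_filter, Finset.mem_univ, true_and,
      Set.mem_ofPred_eq, Prod.mk.injEq] at hp hp'
    obtain ⟨⟨-, hsum⟩, hx, hy, -⟩ := hp
    obtain ⟨⟨-, hsum'⟩, hx', hy', -⟩ := hp'
    obtain rfl := Units.ext haa'
    obtain rfl : b = b' := Units.ext (add_left_cancel (hx.trans hx'.symm))
    obtain rfl : c = c' := Units.ext (sub_right_injective (hy.trans hy'.symm))
    obtain rfl : d = d' := Units.ext (add_left_cancel (hsum.symm.trans hsum'))
    rfl

/-- The Kloosterman sum `S(a, b; q)`, with the inverse attached to the first argument. -/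
noncomputable def kloostermanSum (a b : ZMod q) : ℂ :=
  ∑ u : (ZMod q)ˣ, ZMod.stdAddChar (N := q) (a * ↑u⁻¹ + b * u)

lemma sum_sum_norm_kloostermanSum_pow_four_le :
    ∑ a : ZMod q, ∑ b : ZMod q, ‖kloostermanSum a b‖ ^ 4 ≤
      (q : ℝ) ^ 2 * (2 * (q * q.divisors.card) ^ 2) := by
  have hsq (a b : ZMod q) : ‖kloostermanSum a b‖ ^ 4 = ‖∑ p : (ZMod q)ˣ × (ZMod q)ˣ,
      ZMod.stdAddChar (N := q) (a * (↑p.1⁻¹ + ↑p.2⁻¹) + b * (p.1 + p.2))‖ ^ 2 := by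
    rw [show ‖kloostermanSum a b‖ ^ 4 = ‖kloostermanSum a b * kloostermanSum a b‖ ^ 2 by
      rw [norm_mul]; ring, kloostermanSum, Finset.sum_mul_sum, Fintype.sum_prod_type]
    simp only [← AddChar.map_add_eq_mul, mul_add, add_add_add_comm]
  simp only [hsq]
  rw [sum_sum_norm_sq_sum_addChar (ZMod.isPrimitive_stdAddChar q), ZMod.card]
  gcongr
  exact_mod_cast card_add_eq_add_and_inv_add_inv_eq_le (q := q)

lemma kloostermanSum_mul_mul_inv (a b : ZMod q) (t : (ZMod q)ˣ) :
    kloostermanSum (q := q) (a * t) (b * ↑t⁻¹) = kloostermanSum a b := by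
  refine (Fintype.sum_equiv (Equiv.mulLeft t) _ _ fun u ↦ ?_).symm
  congr 1
  simp only [Equiv.coe_mulLeft, mul_inv_rev, Units.val_mul]
  linear_combination (-(a * ↑u⁻¹) - b * u) * t.mul_inv

/-- The twists `(a t, b t⁻¹)`, for units `t`, contribute `φ(q)` copies of `S(a, b)` to the fourth
moment, and each pair arises in this way from at most `gcd (a, q)` units. -/
lemma totient_mul_norm_kloostermanSum_pow_four_le (a b : ZMod q) :
    (q.totient : ℝ) * ‖kloostermanSum a b‖ ^ 4 ≤
      Nat.gcd a.val q * ∑ x : ZMod q, ∑ y : ZMod q, ‖kloostermanSum x y‖ ^ 4 := by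
  let twist (t : (ZMod q)ˣ) : ZMod q × ZMod q := (a * t, b * ↑t⁻¹)
  have hfibre (p : ZMod q × ZMod q) :
      (Finset.univ.filter fun t ↦ twist t = p).card ≤ Nat.gcd a.val q := by
    refine (Finset.card_le_card_of_injOn (fun t : (ZMod q)ˣ ↦ (t : ZMod q)) (fun t ht ↦ ?_)
      (Units.val_injective.injOn)).trans (card_filter_mul_eq_le a p.1)
    simp only [Finset.coe_filter, Finset.mem_univ, true_and, Set.mem_ofPred_eq] at ht ⊢
    exact congrArg Prod.fst ht
  calc (q.totient : ℝ) * ‖kloostermanSum a b‖ ^ 4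
      = ∑ t : (ZMod q)ˣ, ‖kloostermanSum (twist t).1 (twist t).2‖ ^ 4 := by
        simp [twist, kloostermanSum_mul_mul_inv, ZMod.card_units_eq_totient]
    _ = ∑ p : ZMod q × ZMod q,
          (Finset.univ.filter fun t ↦ twist t = p).card * ‖kloostermanSum p.1 p.2‖ ^ 4 := by
        rw [← Finset.sum_fiberwise Finset.univ twist]
        refine Finset.sum_congr rfl fun p _ ↦ ?_
        rw [← nsmul_eq_mul, ← Finset.sum_const]
        refine Finset.sum_congr rfl fun t ht ↦ ?_
        rw [(Finset.mem_filter.1 ht).2]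
    _ ≤ ∑ p : ZMod q × ZMod q, Nat.gcd a.val q * ‖kloostermanSum p.1 p.2‖ ^ 4 := by
        gcongr with p
        exact hfibre p
    _ = Nat.gcd a.val q * ∑ x : ZMod q, ∑ y : ZMod q, ‖kloostermanSum x y‖ ^ 4 := by
        rw [← Finset.mul_sum, Fintype.sum_prod_type]

lemma norm_kloostermanSum_pow_four_le (a b : ZMod q) :
    ‖kloostermanSum a b‖ ^ 4 ≤ 2 * Nat.gcd a.val q * q ^ 3 * (q.divisors.card : ℝ) ^ 3 := by
  have hq : (0 : ℝ) < q := Nat.cast_pos.2 (NeZero.pos q)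
  have hφ : (q : ℝ) ≤ q.totient * q.divisors.card := mod_cast le_totient_mul_card_divisors q
  refine le_of_mul_le_mul_left ?_ hq
  calc (q : ℝ) * ‖kloostermanSum a b‖ ^ 4
      ≤ (q.totient * q.divisors.card) * ‖kloostermanSum a b‖ ^ 4 := by gcongr
    _ = q.divisors.card * (q.totient * ‖kloostermanSum a b‖ ^ 4) := by ring
    _ ≤ q.divisors.card *
          (Nat.gcd a.val q * ((q : ℝ) ^ 2 * (2 * (q * q.divisors.card) ^ 2))) := by
        refine mul_le_mul_of_nonneg_left
          ((totient_mul_norm_kloostermanSum_pow_four_le a b).trans ?_) (Nat.cast_nonneg _)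
        gcongr
        exact sum_sum_norm_kloostermanSum_pow_four_le
    _ = q * (2 * Nat.gcd a.val q * q ^ 3 * (q.divisors.card : ℝ) ^ 3) := by ring

lemma norm_kloostermanSum_le (a b : ZMod q) :
    ‖kloostermanSum a b‖ ≤
      2 * Nat.gcd a.val q * q.divisors.card * (q : ℝ) ^ (3 / 4 : ℝ) := by
  have hg : (1 : ℝ) ≤ Nat.gcd a.val q := mod_cast Nat.gcd_pos_of_pos_right _ (NeZero.pos q)
  have hτ : (1 : ℝ) ≤ q.divisors.card := mod_cast Finset.card_pos.2 ⟨q, by simp [NeZero.ne q]⟩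
  refine le_of_pow_le_pow_left₀ four_ne_zero (by positivity) ?_
  calc ‖kloostermanSum a b‖ ^ 4
      ≤ 2 * Nat.gcd a.val q * q ^ 3 * (q.divisors.card : ℝ) ^ 3 :=
        norm_kloostermanSum_pow_four_le a b
    _ ≤ 2 ^ 4 * (Nat.gcd a.val q : ℝ) ^ 4 * q ^ 3 * (q.divisors.card : ℝ) ^ 4 := by
        gcongr
        · norm_num
        · exact le_self_pow₀ hg four_ne_zero
        · norm_num
    _ = (2 * Nat.gcd a.val q * q.divisors.card * (q : ℝ) ^ (3 / 4 : ℝ)) ^ 4 := by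
        rw [mul_pow _ ((q : ℝ) ^ (3 / 4 : ℝ)), ← Real.rpow_natCast ((q : ℝ) ^ (3 / 4 : ℝ)),
          ← Real.rpow_mul (Nat.cast_nonneg q)]
        norm_num
        ring

end Kloosterman

section IncompleteKloosterman

lemma norm_sum_range_sub_sum_range_add_le {E : Type*} [SeminormedAddCommGroup E] {f : ℕ → E}
    (hf : ∀ i, ‖f i‖ ≤ 1) (l b : ℕ) :
    ‖∑ i ∈ Finset.range l, f i - ∑ i ∈ Finset.range l, f (b + i)‖ ≤ 2 * b := by
  have hle (g : ℕ → E) (hg : ∀ i, ‖g i‖ ≤ 1) : ‖∑ i ∈ Finset.range b, g i‖ ≤ b := by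
    simpa using norm_sum_le_of_le (Finset.range b) fun i _ ↦ hg i
  have hswap : ∑ i ∈ Finset.range l, f i - ∑ i ∈ Finset.range l, f (b + i) =
      ∑ i ∈ Finset.range b, f i - ∑ i ∈ Finset.range b, f (l + i) := by
    rw [sub_eq_sub_iff_add_eq_add, ← Finset.sum_range_add, ← Finset.sum_range_add, add_comm l b]
  calc ‖∑ i ∈ Finset.range l, f i - ∑ i ∈ Finset.range l, f (b + i)‖
      ≤ ‖∑ i ∈ Finset.range b, f i‖ + ‖∑ i ∈ Finset.range b, f (l + i)‖ := hswap ▸ norm_sub_le _ _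
    _ ≤ b + b := add_le_add (hle f hf) (hle _ fun i ↦ hf (l + i))
    _ = 2 * b := by ring

lemma injOn_natCast_add_range (s : ℕ) {l q : ℕ} (hl : l ≤ q) :
    Set.InjOn (fun i : ℕ ↦ ((s + i : ℕ) : ZMod q)) (Finset.range l) := by
  intro i hi j hj hij
  simp only [Finset.coe_range, Set.mem_Iio] at hi hj
  rw [ZMod.natCast_eq_natCast_iff] at hij
  exact (Nat.ModEq.add_left_cancel' s hij).eq_of_lt_of_lt (hi.trans_le hl) (hj.trans_le hl)

variable {q : ℕ} [NeZero q]

/-- The phase `r ↦ e(a r⁻¹ / q)`, extended by zero to the non-units. -/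
noncomputable def inversePhase (a r : ZMod q) : ℂ :=
  if IsUnit r then ZMod.stdAddChar (a * r⁻¹) else 0

lemma norm_inversePhase_le_one (a r : ZMod q) : ‖inversePhase a r‖ ≤ 1 := by
  unfold inversePhase
  split_ifs <;> simp

lemma sum_kloostermanSum_mul_stdAddChar (a r : ZMod q) :
    ∑ b : ZMod q, kloostermanSum a b * ZMod.stdAddChar (b * -r) = q * inversePhase a r := by
  have hphase (b : ZMod q) : kloostermanSum a b * ZMod.stdAddChar (b * -r) =
      ∑ u : (ZMod q)ˣ, ZMod.stdAddChar (N := q) (a * ↑u⁻¹) *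
        ZMod.stdAddChar (N := q) (b * (u - r)) := by
    rw [kloostermanSum, Finset.sum_mul]
    refine Finset.sum_congr rfl fun u _ ↦ ?_
    rw [← AddChar.map_add_eq_mul, ← AddChar.map_add_eq_mul]
    congr 1
    ring
  simp only [hphase]
  rw [Finset.sum_comm]
  simp only [← Finset.mul_sum, AddChar.sum_mulShift _ (ZMod.isPrimitive_stdAddChar q), sub_eq_zero,
    ZMod.card]
  unfold inversePhase
  split_ifs with hr
  · obtain ⟨v, rfl⟩ := hr
    simp [Units.val_inj, ZMod.inv_coe_unit, mul_comm]
  · simp [fun u : (ZMod q)ˣ ↦ show (u : ZMod q) ≠ r from fun h ↦ hr (h ▸ u.isUnit)]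

lemma norm_sum_sum_inversePhase_le {a : ZMod q} {S : ℝ} (hS : ∀ b, ‖kloostermanSum a b‖ ≤ S)
    (A B : Finset (ZMod q)) :
    ‖∑ x ∈ A, ∑ y ∈ B, inversePhase a (x + y)‖ ≤ S * √(A.card * B.card) := by
  have hq : (0 : ℝ) < q := Nat.cast_pos.2 (NeZero.pos q)
  have hS0 : 0 ≤ S := (norm_nonneg _).trans (hS 0)
  let Φ (C : Finset (ZMod q)) (b : ZMod q) : ℂ := ∑ x ∈ C, ZMod.stdAddChar (b * x)
  have hsplit (b : ZMod q) :
      ∑ x ∈ A, ∑ y ∈ B, kloostermanSum a b * ZMod.stdAddChar (b * -(x + y)) =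
        kloostermanSum a b * (Φ A (-b) * Φ B (-b)) := by
    simp only [Φ, Finset.sum_mul_sum]
    simp only [Finset.mul_sum, ← AddChar.map_add_eq_mul]
    refine Finset.sum_congr rfl fun x _ ↦ Finset.sum_congr rfl fun y _ ↦ ?_
    congr 2
    ring
  have hcomplete : (q : ℂ) * ∑ x ∈ A, ∑ y ∈ B, inversePhase a (x + y) =
      ∑ b : ZMod q, kloostermanSum a b * (Φ A (-b) * Φ B (-b)) := by
    simp only [← hsplit, Finset.mul_sum, ← sum_kloostermanSum_mul_stdAddChar]
    exact (Finset.sum_congr rfl fun x _ ↦ Finset.sum_comm).trans Finset.sum_comm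
  refine le_of_mul_le_mul_left ?_ hq
  calc (q : ℝ) * ‖∑ x ∈ A, ∑ y ∈ B, inversePhase a (x + y)‖
      = ‖∑ b : ZMod q, kloostermanSum a b * (Φ A (-b) * Φ B (-b))‖ := by
        rw [← hcomplete, norm_mul, Complex.norm_natCast]
    _ ≤ ∑ b : ZMod q, S * (‖Φ A (-b)‖ * ‖Φ B (-b)‖) := by
        refine norm_sum_le_of_le _ fun b _ ↦ ?_
        rw [norm_mul, norm_mul]
        gcongr
        exact hS b
    _ = S * ∑ b : ZMod q, ‖Φ A b‖ * ‖Φ B b‖ := by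
        rw [← Finset.mul_sum]
        exact congrArg (S * ·) (Equiv.sum_comp (Equiv.neg (ZMod q)) fun b ↦ ‖Φ A b‖ * ‖Φ B b‖)
    _ ≤ S * (√(q * A.card) * √(q * B.card)) := by
        gcongr
        refine (Real.sum_mul_le_sqrt_mul_sqrt _ _ _).trans_eq ?_
        rw [sum_norm_sq_sum_addChar (ZMod.isPrimitive_stdAddChar q),
          sum_norm_sq_sum_addChar (ZMod.isPrimitive_stdAddChar q), ZMod.card]
    _ = q * (S * √(A.card * B.card)) := by
        rw [Real.sqrt_mul hq.le, Real.sqrt_mul hq.le, Real.sqrt_mul (Nat.cast_nonneg _)]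
        linear_combination S * √A.card * √B.card * Real.mul_self_sqrt hq.le

/-- Averaging the sum over its shifts by `0, …, B - 1` changes it by at most `2 * B` and turns it
into a bilinear sum. -/
lemma norm_sum_range_inversePhase_le {a : ZMod q} {S : ℝ} (hS : ∀ b, ‖kloostermanSum a b‖ ≤ S)
    (s : ℕ) {l B : ℕ} (hl : l ≤ q) (hB : 0 < B) (hBq : B ≤ q) :
    ‖∑ i ∈ Finset.range l, inversePhase a ((s + i : ℕ) : ZMod q)‖ ≤ 2 * B + S * √(q / B) := by
  have hS0 : 0 ≤ S := (norm_nonneg _).trans (hS 0)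
  have hB0 : (0 : ℝ) < B := Nat.cast_pos.2 hB
  set F := ∑ i ∈ Finset.range l, inversePhase a ((s + i : ℕ) : ZMod q)
  let shifted (b : ℕ) : ℂ := ∑ i ∈ Finset.range l, inversePhase a ((s + (b + i) : ℕ) : ZMod q)
  have hdiff : ‖∑ b ∈ Finset.range B, (F - shifted b)‖ ≤ B * (2 * B) := by
    refine (norm_sum_le_of_le _ fun b hb ↦ ?_).trans_eq
      (by rw [Finset.sum_const, Finset.card_range, nsmul_eq_mul])
    refine (norm_sum_range_sub_sum_range_add_le (f := fun i ↦ inversePhase a ((s + i : ℕ) : ZMod q))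
      (fun i ↦ norm_inversePhase_le_one _ _) l b).trans ?_
    have : (b : ℝ) ≤ B := Nat.cast_le.2 (Finset.mem_range.1 hb).le
    gcongr
  have hbilinear : ‖∑ b ∈ Finset.range B, shifted b‖ ≤ S * √(l * B) := by
    have h := norm_sum_sum_inversePhase_le hS
      ((Finset.range l).image fun i : ℕ ↦ ((s + i : ℕ) : ZMod q))
      ((Finset.range B).image fun i : ℕ ↦ ((0 + i : ℕ) : ZMod q))
    simp only [Finset.card_image_of_injOn (injOn_natCast_add_range s hl),
      Finset.card_image_of_injOn (injOn_natCast_add_range 0 hBq),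
      Finset.sum_image (injOn_natCast_add_range s hl),
      Finset.sum_image (injOn_natCast_add_range 0 hBq), Finset.card_range] at h
    rw [Finset.sum_comm] at h
    convert h using 6
    push_cast
    ring
  have hsqrt : √((l : ℝ) * B) ≤ B * √(q / B) := by
    calc √((l : ℝ) * B) ≤ √((B : ℝ) ^ 2 * (q / B)) := by
          apply Real.sqrt_le_sqrt
          rw [show (B : ℝ) ^ 2 * (q / B) = q * B by field_simp]
          gcongr
      _ = B * √(q / B) := by rw [Real.sqrt_mul (by positivity), Real.sqrt_sq hB0.le]
  refine le_of_mul_le_mul_left ?_ hB0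
  calc (B : ℝ) * ‖F‖
      = ‖∑ b ∈ Finset.range B, (F - shifted b) + ∑ b ∈ Finset.range B, shifted b‖ := by
        rw [Finset.sum_sub_distrib, sub_add_cancel, Finset.sum_const, Finset.card_range,
          nsmul_eq_mul, norm_mul, Complex.norm_natCast]
    _ ≤ B * (2 * B) + S * √(l * B) := (norm_add_le _ _).trans (add_le_add hdiff hbilinear)
    _ ≤ B * (2 * B) + S * (B * √(q / B)) := by gcongr
    _ = B * (2 * B + S * √(q / B)) := by ring

end IncompleteKloosterman

section AverageOverModuli

lemma coe_fourierChar_mul_inv_val_div {q r : ℕ} [NeZero q] (m : ℕ) (hr : r.Coprime q) :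
    (𝐞 (m * ((r : ZMod q)⁻¹).val / q) : ℂ) = inversePhase (m : ZMod q) r := by
  rw [inversePhase, if_pos ((ZMod.isUnit_iff_coprime r q).2 hr),
    show (m : ZMod q) * (r : ZMod q)⁻¹ = ((m * ((r : ZMod q)⁻¹).val : ℕ) : ℤ) by simp,
    ZMod.stdAddChar_coe, Real.fourierChar_apply]
  push_cast
  congr 1
  ring

lemma sum_filter_coprime_fourierChar_eq (m s l q : ℕ) [NeZero q] :
    ∑ r ∈ (Finset.Ico s (s + l)).filter (·.Coprime q), (𝐞 (m * ((r : ZMod q)⁻¹).val / q) : ℂ) =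
      ∑ i ∈ Finset.range l, inversePhase (m : ZMod q) ((s + i : ℕ) : ZMod q) := by
  rw [Finset.sum_filter, Finset.sum_Ico_eq_sum_range, Nat.add_sub_cancel_left]
  refine Finset.sum_congr rfl fun i _ ↦ ?_
  split_ifs with hi
  · exact coe_fourierChar_mul_inv_val_div m hi
  · rw [inversePhase, if_neg (mt (ZMod.isUnit_iff_coprime _ q).1 hi)]

lemma norm_sum_filter_coprime_fourierChar_le {η : ℝ} (hη : 0 < η) (hη1 : η ≤ 1) (m s : ℕ)
    {l q : ℕ} (hq : 0 < q) (hl : l ≤ q) :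
    ‖∑ r ∈ (Finset.Ico s (s + l)).filter (·.Coprime q), (𝐞 (m * ((r : ZMod q)⁻¹).val / q) : ℂ)‖ ≤
      2 * (η * q + 1) + 2 * Nat.gcd m q * q.divisors.card * (q : ℝ) ^ (3 / 4 : ℝ) * √(1 / η) := by
  have : NeZero q := ⟨hq.ne'⟩
  have hq0 : (0 : ℝ) < q := Nat.cast_pos.2 hq
  have hB : 0 < ⌈η * q⌉₊ := Nat.ceil_pos.2 (by positivity)
  have hgcd : Nat.gcd (m : ZMod q).val q = Nat.gcd m q := by
    rw [ZMod.val_natCast, (Nat.mod_modEq m q).gcd_eq]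
  rw [sum_filter_coprime_fourierChar_eq]
  refine (norm_sum_range_inversePhase_le (norm_kloostermanSum_le (m : ZMod q)) s hl hB
    (Nat.ceil_le.2 (mul_le_of_le_one_left hq0.le hη1))).trans ?_
  rw [hgcd]
  gcongr ?_ + ?_ * √?_
  · gcongr
    exact (Nat.ceil_lt_add_one (by positivity)).le
  · rw [div_le_div_iff₀ (Nat.cast_pos.2 hB) hη, one_mul, mul_comm]
    exact Nat.le_ceil _

lemma sum_norm_sum_filter_coprime_fourierChar_le {η T : ℝ} (hη : 0 < η) (hη1 : η ≤ 1) {m n : ℕ}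
    (hm : 0 < m) (hT : ∀ q ≤ n, (q.divisors.card : ℝ) ≤ T) (s : ℕ → ℕ) {l : ℕ → ℕ}
    (hl : ∀ q, l q ≤ q) :
    ∑ q ∈ Finset.Icc 1 n, ‖∑ r ∈ (Finset.Ico (s q) (s q + l q)).filter (·.Coprime q),
        (𝐞 (m * ((r : ZMod q)⁻¹).val / q) : ℂ)‖ ≤
      2 * η * n ^ 2 + 2 * n +
        2 * T * (n : ℝ) ^ (3 / 4 : ℝ) * √(1 / η) * (n * m.divisors.card) := by
  have hT0 : 0 ≤ T := (Nat.cast_nonneg _).trans (hT 0 n.zero_le)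
  calc ∑ q ∈ Finset.Icc 1 n, ‖∑ r ∈ (Finset.Ico (s q) (s q + l q)).filter (·.Coprime q),
        (𝐞 (m * ((r : ZMod q)⁻¹).val / q) : ℂ)‖
      ≤ ∑ q ∈ Finset.Icc 1 n, (2 * (η * n + 1) +
          2 * T * (n : ℝ) ^ (3 / 4 : ℝ) * √(1 / η) * Nat.gcd m q) := by
        refine Finset.sum_le_sum fun q hq ↦ ?_
        obtain ⟨hq1, hqn⟩ := Finset.mem_Icc.1 hq
        calc _ ≤ 2 * (η * q + 1) +
              2 * Nat.gcd m q * q.divisors.card * (q : ℝ) ^ (3 / 4 : ℝ) * √(1 / η) :=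
              norm_sum_filter_coprime_fourierChar_le hη hη1 m (s q) hq1 (hl q)
          _ ≤ 2 * (η * n + 1) + 2 * Nat.gcd m q * T * (n : ℝ) ^ (3 / 4 : ℝ) * √(1 / η) := by
              have := hT q hqn
              gcongr
          _ = _ := by ring
    _ = 2 * η * n ^ 2 + 2 * n + 2 * T * (n : ℝ) ^ (3 / 4 : ℝ) * √(1 / η) *
          (∑ q ∈ Finset.Icc 1 n, Nat.gcd m q : ℕ) := by
        rw [Finset.sum_add_distrib, Finset.sum_const, ← Finset.mul_sum, Nat.card_Icc,
          Nat.add_sub_cancel, nsmul_eq_mul, Nat.cast_sum]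
        ring
    _ ≤ _ := by
        gcongr
        exact_mod_cast sum_gcd_Icc_le m n hm

/-- Optimising `η = n ^ (-1 / 8)` in the previous bound and losing `n ^ (1 / 16)` for the divisors
gives the exponent. -/
theorem exists_forall_sum_norm_sum_fourierChar_inv_le (M : ℝ) :
    ∃ K : ℝ, ∀ (m n : ℕ) (s l : ℕ → ℕ), 0 < m → m ≤ M * n ^ 2 → (∀ q, l q ≤ q) →
      ∑ q ∈ Finset.Icc 1 n, ‖∑ r ∈ (Finset.Ico (s q) (s q + l q)).filter (·.Coprime q),
        (𝐞 (m * ((r : ZMod q)⁻¹).val / q) : ℂ)‖ ≤ K * (n : ℝ) ^ (15 / 8 : ℝ) := by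
  obtain ⟨C, hC, hτ⟩ := exists_forall_card_divisors_le_rpow (ε := 1 / 48) (by norm_num)
  refine ⟨4 + 2 * C ^ 2 * M ^ (1 / 48 : ℝ), fun m n s l hm hmn hl ↦ ?_⟩
  rcases n.eq_zero_or_pos with rfl | hn
  · simp
  have hn0 : (0 : ℝ) < n := Nat.cast_pos.2 hn
  have hn1 : (1 : ℝ) ≤ n := Nat.one_le_cast.2 hn
  have hM : 0 < M := pos_of_mul_pos_left ((Nat.cast_pos.2 hm).trans_le hmn) (by positivity)
  have hτq : ∀ q ≤ n, (q.divisors.card : ℝ) ≤ C * (n : ℝ) ^ (1 / 48 : ℝ) :=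
    fun q hq ↦ (hτ q).trans (by gcongr)
  have hτm : (m.divisors.card : ℝ) ≤ C * (M ^ (1 / 48 : ℝ) * (n : ℝ) ^ (1 / 24 : ℝ)) := by
    refine (hτ m).trans ?_
    rw [show (1 / 24 : ℝ) = 2 * (1 / 48) by norm_num, Real.rpow_mul hn0.le, Real.rpow_two,
      ← Real.mul_rpow hM.le (by positivity)]
    gcongr
  have hsqrt : √(1 / (n : ℝ) ^ (-1 / 8 : ℝ)) = (n : ℝ) ^ (1 / 16 : ℝ) := by
    rw [one_div, ← Real.rpow_neg hn0.le, Real.sqrt_eq_rpow, ← Real.rpow_mul hn0.le]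
    norm_num
  calc _ ≤ 2 * (n : ℝ) ^ (-1 / 8 : ℝ) * n ^ 2 + 2 * n +
        2 * (C * (n : ℝ) ^ (1 / 48 : ℝ)) * (n : ℝ) ^ (3 / 4 : ℝ) *
          √(1 / (n : ℝ) ^ (-1 / 8 : ℝ)) * (n * m.divisors.card) :=
        sum_norm_sum_filter_coprime_fourierChar_le (by positivity)
          (Real.rpow_le_one_of_one_le_of_nonpos hn1 (by norm_num)) hm hτq s hl
    _ ≤ 2 * ((n : ℝ) ^ (-1 / 8 : ℝ) * (n : ℝ) ^ (2 : ℝ)) + 2 * (n : ℝ) ^ (1 : ℝ) +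
        2 * C ^ 2 * M ^ (1 / 48 : ℝ) * ((n : ℝ) ^ (1 / 48 : ℝ) * (n : ℝ) ^ (3 / 4 : ℝ) *
          (n : ℝ) ^ (1 / 16 : ℝ) * (n : ℝ) ^ (1 : ℝ) * (n : ℝ) ^ (1 / 24 : ℝ)) := by
        rw [hsqrt, Real.rpow_two, Real.rpow_one]
        have := mul_le_mul_of_nonneg_left hτm
          (show 0 ≤ 2 * (C * (n : ℝ) ^ (1 / 48 : ℝ)) * (n : ℝ) ^ (3 / 4 : ℝ) *
            (n : ℝ) ^ (1 / 16 : ℝ) * n by positivity)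
        linarith
    _ = 2 * (n : ℝ) ^ (15 / 8 : ℝ) + 2 * (n : ℝ) ^ (1 : ℝ) +
        2 * C ^ 2 * M ^ (1 / 48 : ℝ) * (n : ℝ) ^ (15 / 8 : ℝ) := by
        simp only [← Real.rpow_add hn0]
        norm_num
    _ ≤ 2 * (n : ℝ) ^ (15 / 8 : ℝ) + 2 * (n : ℝ) ^ (15 / 8 : ℝ) +
        2 * C ^ 2 * M ^ (1 / 48 : ℝ) * (n : ℝ) ^ (15 / 8 : ℝ) := by
        have := Real.rpow_le_rpow_of_exponent_le hn1 (show (1 : ℝ) ≤ 15 / 8 by norm_num)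
        gcongr
    _ = _ := by ring

end AverageOverModuli

section Sawtooth

/-- The sawtooth function, with mean zero on each period. -/
noncomputable def sawtooth (y : ℝ) : ℝ := 1 / 2 - Int.fract y

/-- The primitive of `sawtooth` with mean zero, namely `-B₂(fract y) / 2`. Its Fourier series
converges absolutely, unlike that of `sawtooth`. -/
noncomputable def sawtoothPrimitive (y : ℝ) : ℝ := -(Int.fract y ^ 2 - Int.fract y + 1 / 6) / 2

lemma hasSum_sawtoothPrimitive (y : ℝ) :
    HasSum (fun n : ℕ ↦ 1 / (n : ℝ) ^ 2 * Real.cos (2 * Real.pi * n * y))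
      (-(2 * Real.pi ^ 2) * sawtoothPrimitive y) := by
  have hperiodic (n : ℕ) :
      Real.cos (2 * Real.pi * n * Int.fract y) = Real.cos (2 * Real.pi * n * y) := by
    rw [show 2 * Real.pi * n * Int.fract y =
      2 * Real.pi * n * y - ((n * ⌊y⌋ : ℤ) : ℝ) * (2 * Real.pi) by rw [Int.fract]; push_cast; ring,
      Real.cos_sub_int_mul_two_pi]
  have hB₂ : (Polynomial.map (algebraMap ℚ ℝ) (Polynomial.bernoulli 2)).eval (Int.fract y) =
      Int.fract y ^ 2 - Int.fract y + 1 / 6 := by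
    simp [Polynomial.bernoulli, Finset.sum_range_succ, bernoulli_one, bernoulli_two]
    ring
  have h := hasSum_one_div_nat_pow_mul_cos one_ne_zero
    (⟨Int.fract_nonneg y, (Int.fract_lt_one y).le⟩ : Int.fract y ∈ Set.Icc 0 1)
  rw [mul_one, hB₂] at h
  simp only [hperiodic] at h
  convert h using 1
  rw [sawtoothPrimitive]
  norm_num
  ring

lemma fract_add_eq_or {τ : ℝ} (hτ0 : 0 ≤ τ) (hτ1 : τ < 1) (y : ℝ) :
    Int.fract (y + τ) = Int.fract y + τ ∨
      1 ≤ Int.fract y + τ ∧ Int.fract (y + τ) = Int.fract y + τ - 1 := by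
  have hy := Int.self_sub_floor y
  rcases lt_or_ge (Int.fract y + τ) 1 with h | h
  · exact .inl (Int.fract_eq_iff.2 ⟨add_nonneg (Int.fract_nonneg y) hτ0, h, ⌊y⌋, by linarith⟩)
  · refine .inr ⟨h, Int.fract_eq_iff.2 ⟨by linarith, by linarith [Int.fract_lt_one y], ⌊y⌋ + 1, ?_⟩⟩
    push_cast
    linarith

lemma mul_sawtooth_le {τ : ℝ} (hτ0 : 0 ≤ τ) (hτ1 : τ < 1) (y : ℝ) :
    τ * sawtooth y ≤ τ ^ 2 / 2 + (sawtoothPrimitive (y + τ) - sawtoothPrimitive y) := by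
  rw [sawtooth, sawtoothPrimitive, sawtoothPrimitive]
  rcases fract_add_eq_or hτ0 hτ1 y with h | ⟨hy, h⟩ <;> rw [h]
  · linarith
  · linarith

lemma mul_neg_sawtooth_le {τ : ℝ} (hτ0 : 0 ≤ τ) (hτ1 : τ < 1) (y : ℝ) :
    τ * -sawtooth y ≤ τ ^ 2 / 2 + (sawtoothPrimitive (y - τ) - sawtoothPrimitive y) := by
  obtain ⟨z, rfl⟩ : ∃ z, y = z + τ := ⟨y - τ, by ring⟩
  rw [add_sub_cancel_right, sawtooth, sawtoothPrimitive, sawtoothPrimitive]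
  rcases fract_add_eq_or hτ0 hτ1 z with h | ⟨-, h⟩ <;> rw [h]
  · linarith
  · linarith [Int.fract_lt_one z]

lemma abs_sum_cos_le_norm_sum_fourierChar {ι : Type*} (s : Finset ι) (y : ι → ℝ) (θ : ℝ) (n : ℕ) :
    |∑ i ∈ s, Real.cos (2 * Real.pi * n * (y i + θ))| ≤ ‖∑ i ∈ s, (𝐞 (n * y i) : ℂ)‖ := by
  have hre : ∑ i ∈ s, Real.cos (2 * Real.pi * n * (y i + θ)) =
      ((𝐞 (n * θ) : ℂ) * ∑ i ∈ s, (𝐞 (n * y i) : ℂ)).re := by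
    rw [Finset.mul_sum, Complex.re_sum]
    refine Finset.sum_congr rfl fun i _ ↦ ?_
    rw [← Circle.coe_mul, ← AddChar.map_add_eq_mul, Real.fourierChar_apply,
      Complex.exp_ofReal_mul_I_re]
    ring_nf
  rw [hre]
  calc |((𝐞 (n * θ) : ℂ) * ∑ i ∈ s, (𝐞 (n * y i) : ℂ)).re|
      ≤ ‖(𝐞 (n * θ) : ℂ) * ∑ i ∈ s, (𝐞 (n * y i) : ℂ)‖ := Complex.abs_re_le_norm _
    _ = ‖∑ i ∈ s, (𝐞 (n * y i) : ℂ)‖ := by rw [norm_mul, Circle.norm_coe, one_mul]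

section Weyl

variable {α ι : Type*} {l : Filter α} {s : α → Finset ι} {y : α → ι → ℝ} {M : α → ℝ}

lemma tendsto_sum_sawtoothPrimitive_div (hM : ∀ k, ((s k).card : ℝ) ≤ M k)
    (hexp : ∀ h : ℕ, h ≠ 0 →
      Tendsto (fun k ↦ ‖∑ i ∈ s k, (𝐞 (h * y k i) : ℂ)‖ / M k) l (𝓝 0)) (θ : α → ℝ) :
    Tendsto (fun k ↦ (∑ i ∈ s k, sawtoothPrimitive (y k i + θ k)) / M k) l (𝓝 0) := by
  have hM0 (k : α) : 0 ≤ M k := (Nat.cast_nonneg _).trans (hM k)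
  set f : α → ℕ → ℝ := fun k n ↦
    1 / (n : ℝ) ^ 2 * ((∑ i ∈ s k, Real.cos (2 * Real.pi * n * (y k i + θ k))) / M k) with hf
  have hsum (k : α) :
      HasSum (f k) (-(2 * Real.pi ^ 2) * ((∑ i ∈ s k, sawtoothPrimitive (y k i + θ k)) / M k)) := by
    have := (hasSum_sum fun i (_ : i ∈ s k) ↦
      hasSum_sawtoothPrimitive (y k i + θ k)).div_const (M k)
    simp only [← Finset.mul_sum, mul_div_assoc] at this
    exact this
  have hlim (n : ℕ) : Tendsto (f · n) l (𝓝 0) := by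
    rcases eq_or_ne n 0 with rfl | hn
    · simp [hf, tendsto_const_nhds]
    rw [← mul_zero (1 / (n : ℝ) ^ 2)]
    refine (squeeze_zero_norm (fun k ↦ ?_) (hexp n hn)).const_mul _
    rw [Real.norm_eq_abs, abs_div, abs_of_nonneg (hM0 k)]
    exact div_le_div_of_nonneg_right (abs_sum_cos_le_norm_sum_fourierChar _ _ _ _) (hM0 k)
  have hbound (k : α) (n : ℕ) : ‖f k n‖ ≤ 1 / (n : ℝ) ^ 2 := by
    rw [hf, norm_mul, Real.norm_of_nonneg (by positivity), norm_div, Real.norm_of_nonneg (hM0 k)]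
    refine mul_le_of_le_one_right (by positivity) (div_le_one_of_le₀ ?_ (hM0 k))
    refine (norm_sum_le_of_le _ fun i _ ↦ Real.abs_cos_le_one _).trans ?_
    simpa using hM k
  have htannery := tendsto_tsum_of_dominated_convergence
    (Real.summable_one_div_nat_pow.2 one_lt_two) hlim (.of_forall hbound)
  simp only [(hsum _).tsum_eq, tsum_zero] at htannery
  have hπ : -(2 * Real.pi ^ 2) ≠ 0 := by simp [Real.pi_ne_zero]
  have := htannery.const_mul (-(2 * Real.pi ^ 2))⁻¹
  rw [mul_zero] at this
  exact this.congr fun k ↦ inv_mul_cancel_left₀ hπ _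

lemma eventually_abs_sum_sawtooth_div_le (hM : ∀ k, ((s k).card : ℝ) ≤ M k)
    (hexp : ∀ h : ℕ, h ≠ 0 →
      Tendsto (fun k ↦ ‖∑ i ∈ s k, (𝐞 (h * y k i) : ℂ)‖ / M k) l (𝓝 0)) (θ : α → ℝ)
    {τ : ℝ} (hτ0 : 0 < τ) (hτ1 : τ < 1) :
    ∀ᶠ k in l, |(∑ i ∈ s k, sawtooth (y k i + θ k)) / M k| ≤ τ := by
  have hM0 (k : α) : 0 ≤ M k := (Nat.cast_nonneg _).trans (hM k)
  set P : ℝ → α → ℝ := fun t k ↦ (∑ i ∈ s k, sawtoothPrimitive (y k i + (θ k + t))) / M k with hP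
  have hsmall (t : ℝ) : ∀ᶠ k in l, P t k - P 0 k ≤ τ ^ 2 / 2 := by
    have hlim (t : ℝ) : Tendsto (P t) l (𝓝 0) :=
      tendsto_sum_sawtoothPrimitive_div hM hexp fun k ↦ θ k + t
    have hdiff : Tendsto (fun k ↦ P t k - P 0 k) l (𝓝 0) := by
      simpa using (hlim t).sub (hlim 0)
    exact (hdiff.eventually_lt_const (by positivity)).mono fun _ ↦ le_of_lt
  have hmean (g : ℝ → ℝ) (t : ℝ) (k : α)
      (hg : ∀ z, τ * g z ≤ τ ^ 2 / 2 + (sawtoothPrimitive (z + t) - sawtoothPrimitive z)) :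
      τ * ((∑ i ∈ s k, g (y k i + θ k)) / M k) ≤ τ ^ 2 / 2 + (P t k - P 0 k) :=
    calc τ * ((∑ i ∈ s k, g (y k i + θ k)) / M k)
        ≤ (∑ i ∈ s k, (τ ^ 2 / 2 + (sawtoothPrimitive (y k i + (θ k + t)) -
            sawtoothPrimitive (y k i + (θ k + 0))))) / M k := by
          rw [← mul_div_assoc, Finset.mul_sum]
          refine div_le_div_of_nonneg_right (Finset.sum_le_sum fun i _ ↦ ?_) (hM0 k)
          simpa only [add_assoc, add_zero] using hg (y k i + θ k)
      _ = (s k).card / M k * (τ ^ 2 / 2) + (P t k - P 0 k) := by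
          rw [Finset.sum_add_distrib, Finset.sum_sub_distrib, Finset.sum_const, nsmul_eq_mul, hP]
          ring
      _ ≤ τ ^ 2 / 2 + (P t k - P 0 k) := by
          gcongr
          exact mul_le_of_le_one_left (by positivity) (div_le_one_of_le₀ (hM k) (hM0 k))
  filter_upwards [hsmall τ, hsmall (-τ)] with k hk hk'
  have hupper := hmean sawtooth τ k (mul_sawtooth_le hτ0.le hτ1)
  have hlower := hmean (-sawtooth ·) (-τ) k (mul_neg_sawtooth_le hτ0.le hτ1)
  rw [Finset.sum_neg_distrib, neg_div] at hlower
  rw [abs_le]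
  constructor <;> nlinarith

theorem tendsto_sum_sawtooth_div (hM : ∀ k, ((s k).card : ℝ) ≤ M k)
    (hexp : ∀ h : ℕ, h ≠ 0 →
      Tendsto (fun k ↦ ‖∑ i ∈ s k, (𝐞 (h * y k i) : ℂ)‖ / M k) l (𝓝 0)) (θ : α → ℝ) :
    Tendsto (fun k ↦ (∑ i ∈ s k, sawtooth (y k i + θ k)) / M k) l (𝓝 0) := by
  rw [Metric.tendsto_nhds]
  intro ε hε
  have hτ := half_lt_self (lt_min hε one_pos)
  filter_upwards [eventually_abs_sum_sawtooth_div_le hM hexp θ (half_pos (lt_min hε one_pos))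
    (hτ.trans_le (min_le_right _ _))] with k hk
  rw [Real.dist_0_eq_abs]
  exact hk.trans_lt (hτ.trans_le (min_le_left _ _))

end Weyl

end Sawtooth

section Farey

/-- The fractions `a / q < a' / q'` are consecutive among the fractions with denominator at most
`n`. Neither is required to lie in `[0, 1]`. -/
structure IsFareyGap (n : ℕ) (a : ℤ) (q : ℕ) (a' : ℤ) (q' : ℕ) : Prop where
  left_pos : 0 < q
  left_le : q ≤ n
  right_pos : 0 < q'
  right_le : q' ≤ n
  lt_add : n < q + q'
  det_eq_one : a' * q - a * q' = 1

/-- No fraction with denominator at most `n` lies in the open interval of length `δ` centred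
at `x`. -/
def IsFractionFree (n : ℕ) (δ x : ℝ) : Prop :=
  ∀ (r : ℕ) (p : ℤ), 0 < r → r ≤ n → ¬(x - δ / 2 < (p : ℝ) / r ∧ (p : ℝ) / r < x + δ / 2)

variable {n : ℕ}

lemma exists_isFareyGap (x : ℝ) (hn : 1 ≤ n) :
    ∃ a q a' q', IsFareyGap n a q a' q' ∧ (a : ℝ) ≤ x * q ∧ x * q' < a' := by
  induction n, hn using Nat.le_induction with
  | base =>
    refine ⟨⌊x⌋, 1, ⌊x⌋ + 1, 1,
      ⟨one_pos, le_rfl, one_pos, le_rfl, by norm_num, by push_cast; ring⟩, ?_, ?_⟩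
    · simpa using Int.floor_le x
    · simp
  | succ n hn ih =>
    obtain ⟨a, q, a', q', h, hleft, hright⟩ := ih
    obtain ⟨hq, hqn, hq', hq'n, hlt, hdet⟩ := h
    by_cases hs : n + 1 < q + q'
    · exact ⟨a, q, a', q', ⟨hq, by omega, hq', by omega, hs, hdet⟩, hleft, hright⟩
    · rcases lt_or_ge (x * (q + q')) (a + a') with hmediant | hmediant
      · refine ⟨a, q, a + a', q + q', ⟨hq, by omega, by omega, by omega, by omega, ?_⟩, hleft, ?_⟩
        · push_cast; linear_combination hdet
        · push_cast; exact hmediant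
      · refine ⟨a + a', q + q', a', q', ⟨by omega, by omega, hq', by omega, by omega, ?_⟩, ?_,
          hright⟩
        · push_cast; linear_combination hdet
        · push_cast; exact hmediant

namespace IsFareyGap

variable {a a' b b' : ℤ} {q q' r r' : ℕ}

lemma neg (h : IsFareyGap n a q a' q') : IsFareyGap n (-a') q' (-a) q :=
  ⟨h.right_pos, h.right_le, h.left_pos, h.left_le, add_comm q q' ▸ h.lt_add,
    by linear_combination h.det_eq_one⟩

lemma not_lt_and_lt (h : IsFareyGap n a q a' q') (p : ℤ) (hr : 0 < r) (hrn : r ≤ n) :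
    ¬((a : ℝ) / q < p / r ∧ (p : ℝ) / r < a' / q') := by
  rintro ⟨hleft, hright⟩
  rw [div_lt_div_iff₀ (mod_cast h.left_pos) (mod_cast hr)] at hleft
  rw [div_lt_div_iff₀ (mod_cast hr) (mod_cast h.right_pos)] at hright
  have hleft' : 1 ≤ p * q - a * r := by have : a * r < p * q := mod_cast hleft; omega
  have hright' : 1 ≤ a' * r - p * q' := by have : p * q' < a' * r := mod_cast hright; omega
  have hr_eq : (r : ℤ) = q * (a' * r - p * q') + q' * (p * q - a * r) := by
    linear_combination (-(r : ℤ)) * h.det_eq_one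
  have hge : (q + q' : ℤ) ≤ r := by
    rw [hr_eq]
    exact add_le_add (le_mul_of_one_le_right (by positivity) hright')
      (le_mul_of_one_le_right (by positivity) hleft')
  have := h.lt_add
  omega

lemma left_dvd (h : IsFareyGap n a q a' q') (k : IsFareyGap n b r b' r') {x : ℝ}
    (hleft : (a : ℝ) / q < x) (hright : x < a' / q') (kleft : (b : ℝ) / r < x)
    (kright : x < b' / r') : q ∣ r := by
  have heq : (a : ℝ) / q = b / r := le_antisymm
    (not_lt.1 fun hlt ↦ k.not_lt_and_lt a h.left_pos h.left_le ⟨hlt, hleft.trans kright⟩)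
    (not_lt.1 fun hlt ↦ h.not_lt_and_lt b k.left_pos k.left_le ⟨hlt, kleft.trans hright⟩)
  have hq : (q : ℝ) ≠ 0 := mod_cast h.left_pos.ne'
  have hr : (r : ℝ) ≠ 0 := mod_cast k.left_pos.ne'
  have hcross : a * r = b * q := mod_cast (div_eq_div_iff hq hr).1 heq
  exact Int.natCast_dvd_natCast.1
    ⟨a' * r - b * q', by linear_combination (-(r : ℤ)) * h.det_eq_one - q' * hcross⟩

lemma left_eq (h : IsFareyGap n a q a' q') (k : IsFareyGap n b r b' r') {x : ℝ}
    (hleft : (a : ℝ) / q < x) (hright : x < a' / q') (kleft : (b : ℝ) / r < x)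
    (kright : x < b' / r') : q = r :=
  Nat.dvd_antisymm (h.left_dvd k hleft hright kleft kright)
    (k.left_dvd h kleft kright hleft hright)

lemma right_eq (h : IsFareyGap n a q a' q') (k : IsFareyGap n b r b' r') {x : ℝ}
    (hleft : (a : ℝ) / q < x) (hright : x < a' / q') (kleft : (b : ℝ) / r < x)
    (kright : x < b' / r') : q' = r' :=
  h.neg.left_eq k.neg (x := -x) (by push_cast; rw [neg_div]; exact neg_lt_neg hright)
    (by push_cast; rw [neg_div]; exact neg_lt_neg hleft)
    (by push_cast; rw [neg_div]; exact neg_lt_neg kright)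
    (by push_cast; rw [neg_div]; exact neg_lt_neg kleft)

lemma length_eq (h : IsFareyGap n a q a' q') : (a' : ℝ) / q' - a / q = 1 / (q * q') := by
  have hdet : (a' : ℝ) * q - a * q' = 1 := mod_cast h.det_eq_one
  have hq : (q : ℝ) ≠ 0 := mod_cast h.left_pos.ne'
  have hq' : (q' : ℝ) ≠ 0 := mod_cast h.right_pos.ne'
  rw [← hdet]
  field_simp

lemma coprime (h : IsFareyGap n a q a' q') : q'.Coprime q :=
  Nat.isCoprime_iff_coprime.1 ⟨-a, a', by linear_combination h.det_eq_one⟩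

end IsFareyGap

lemma isFractionFree_iff_exists_isFareyGap (hn : 1 ≤ n) {δ x : ℝ} (hδ : 0 < δ) :
    IsFractionFree n δ x ↔ ∃ a q a' q', IsFareyGap n a q a' q' ∧
      (a : ℝ) / q + δ / 2 ≤ x ∧ x ≤ (a' : ℝ) / q' - δ / 2 := by
  constructor
  · intro hfree
    obtain ⟨a, q, a', q', h, hleft, hright⟩ := exists_isFareyGap x hn
    rw [← div_le_iff₀ (mod_cast h.left_pos)] at hleft
    rw [← lt_div_iff₀ (mod_cast h.right_pos)] at hright
    refine ⟨a, q, a', q', h, ?_, ?_⟩ <;> by_contra! hlt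
    · exact hfree q a h.left_pos h.left_le ⟨by linarith, by linarith⟩
    · exact hfree q' a' h.right_pos h.right_le ⟨by linarith, by linarith⟩
  · rintro ⟨a, q, a', q', h, hleft, hright⟩ r p hr hrn ⟨hp, hp'⟩
    exact h.not_lt_and_lt p hr hrn ⟨by linarith, by linarith⟩

/-- The denominators of consecutive fractions of level `n` whose distance is at least `δ`: the gaps
between such fractions are determined up to integer translation by the pair of denominators. -/
noncomputable def fareyPairs (n : ℕ) (δ : ℝ) : Finset (ℕ × ℕ) :=
  (Finset.Icc 1 n ×ˢ Finset.Icc 1 n).filter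
    fun p ↦ n < p.1 + p.2 ∧ p.2.Coprime p.1 ∧ (p.1 : ℝ) * p.2 * δ ≤ 1

lemma mem_fareyPairs {δ : ℝ} {p : ℕ × ℕ} : p ∈ fareyPairs n δ ↔
    (0 < p.1 ∧ p.1 ≤ n) ∧ (0 < p.2 ∧ p.2 ≤ n) ∧ n < p.1 + p.2 ∧ p.2.Coprime p.1 ∧
      (p.1 : ℝ) * p.2 * δ ≤ 1 := by
  simp only [fareyPairs, Finset.mem_filter, Finset.mem_product, Finset.mem_Icc, and_assoc,
    Nat.succ_le_iff]

lemma card_fareyPairs_le (n : ℕ) (δ : ℝ) : ((fareyPairs n δ).card : ℝ) ≤ (n : ℝ) ^ 2 := by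
  have : (fareyPairs n δ).card ≤ n ^ 2 :=
    (Finset.card_filter_le _ _).trans (by simp [pow_two])
  exact_mod_cast this

lemma sum_fareyPairs_swap (n : ℕ) (δ : ℝ) (f : ℕ × ℕ → ℝ) :
    ∑ p ∈ fareyPairs n δ, f p.swap = ∑ p ∈ fareyPairs n δ, f p := by
  refine Finset.sum_equiv (Equiv.prodComm ℕ ℕ) (fun p ↦ ?_) fun _ _ ↦ rfl
  simp only [mem_fareyPairs, Equiv.prodComm_apply, Prod.fst_swap, Prod.snd_swap,
    Nat.coprime_comm (n := p.2), add_comm p.2, mul_comm (p.2 : ℝ)]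
  tauto

/-- The centres `x` of the intervals of length `δ` contained in the gap between the fractions
`-v / p.1` and `u / p.2`, where `u * p.1 + v * p.2 = 1` is the Bézout relation of `p`. -/
noncomputable def fareyCore (δ : ℝ) (p : ℕ × ℕ) : Set ℝ :=
  Set.Icc (-(p.1.gcdB p.2 : ℝ) / p.1 + δ / 2) ((p.1.gcdA p.2 : ℝ) / p.2 - δ / 2)

lemma gcdA_mul_add_gcdB_mul {q q' : ℕ} (h : q'.Coprime q) :
    q.gcdA q' * q + q.gcdB q' * q' = 1 := by
  have := Nat.gcd_eq_gcd_ab q q'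
  rw [h.symm.gcd_eq_one, Nat.cast_one] at this
  linarith

lemma isFareyGap_of_mem_fareyPairs {δ : ℝ} {p : ℕ × ℕ} (hp : p ∈ fareyPairs n δ) (k : ℤ) :
    IsFareyGap n (-p.1.gcdB p.2 + k * p.1) p.1 (p.1.gcdA p.2 + k * p.2) p.2 := by
  obtain ⟨⟨h1, h1n⟩, ⟨h2, h2n⟩, hlt, hcop, -⟩ := mem_fareyPairs.1 hp
  exact ⟨h1, h1n, h2, h2n, hlt, by linear_combination gcdA_mul_add_gcdB_mul hcop⟩

lemma sub_intCast_mem_fareyCore_iff {δ x : ℝ} {p : ℕ × ℕ} (hp : p ∈ fareyPairs n δ) (k : ℤ) :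
    x - k ∈ fareyCore δ p ↔
      ((-p.1.gcdB p.2 + k * p.1 : ℤ) : ℝ) / p.1 + δ / 2 ≤ x ∧
        x ≤ ((p.1.gcdA p.2 + k * p.2 : ℤ) : ℝ) / p.2 - δ / 2 := by
  obtain ⟨⟨h1, -⟩, ⟨h2, -⟩, -⟩ := mem_fareyPairs.1 hp
  have h1' : (p.1 : ℝ) ≠ 0 := mod_cast h1.ne'
  have h2' : (p.2 : ℝ) ≠ 0 := mod_cast h2.ne'
  push_cast
  rw [fareyCore, Set.mem_Icc, add_div, add_div, mul_div_cancel_right₀ _ h1',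
    mul_div_cancel_right₀ _ h2', le_sub_iff_add_le, sub_le_iff_le_add]
  ring_nf

lemma isFractionFree_iff_exists_fareyCore (hn : 1 ≤ n) {δ x : ℝ} (hδ : 0 < δ) :
    IsFractionFree n δ x ↔ ∃ p ∈ fareyPairs n δ, ∃ k : ℤ, x - k ∈ fareyCore δ p := by
  rw [isFractionFree_iff_exists_isFareyGap hn hδ]
  constructor
  · rintro ⟨a, q, a', q', h, hleft, hright⟩
    have hq : (0 : ℝ) < q := mod_cast h.left_pos
    have hq' : (0 : ℝ) < q' := mod_cast h.right_pos
    have hδle : δ ≤ 1 / (q * q') := by linarith [h.length_eq]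
    have hp : (q, q') ∈ fareyPairs n δ :=
      mem_fareyPairs.2 ⟨⟨h.left_pos, h.left_le⟩, ⟨h.right_pos, h.right_le⟩, h.lt_add, h.coprime, by
        rwa [le_div_iff₀ (by positivity), mul_comm] at hδle⟩
    have hbezout := gcdA_mul_add_gcdB_mul h.coprime
    have hcross : (a' - q.gcdA q') * q = (a + q.gcdB q') * q' := by
      linear_combination h.det_eq_one - hbezout
    set k := q.gcdA q' * (a + q.gcdB q') + q.gcdB q' * (a' - q.gcdA q')
    have hleft_eq : -q.gcdB q' + k * q = a := by
      linear_combination q.gcdB q' * hcross + (a + q.gcdB q') * hbezout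
    have hright_eq : q.gcdA q' + k * q' = a' := by
      linear_combination -q.gcdA q' * hcross + (a' - q.gcdA q') * hbezout
    refine ⟨(q, q'), hp, k, (sub_intCast_mem_fareyCore_iff hp k).2 ?_⟩
    rw [hleft_eq, hright_eq]
    exact ⟨hleft, hright⟩
  · rintro ⟨p, hp, k, hk⟩
    exact ⟨_, _, _, _, isFareyGap_of_mem_fareyPairs hp k, (sub_intCast_mem_fareyCore_iff hp k).1 hk⟩

lemma eq_of_mem_fareyCore {δ x : ℝ} (hδ : 0 < δ) {p p' : ℕ × ℕ} {k k' : ℤ}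
    (hp : p ∈ fareyPairs n δ) (hp' : p' ∈ fareyPairs n δ) (hk : x - k ∈ fareyCore δ p)
    (hk' : x - k' ∈ fareyCore δ p') : p = p' := by
  obtain ⟨hleft, hright⟩ := (sub_intCast_mem_fareyCore_iff hp k).1 hk
  obtain ⟨hleft', hright'⟩ := (sub_intCast_mem_fareyCore_iff hp' k').1 hk'
  have hgap := isFareyGap_of_mem_fareyPairs hp k
  have hgap' := isFareyGap_of_mem_fareyPairs hp' k'
  exact Prod.ext
    (hgap.left_eq hgap' (x := x) (by linarith) (by linarith) (by linarith) (by linarith))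
    (hgap.right_eq hgap' (x := x) (by linarith) (by linarith) (by linarith) (by linarith))

end Farey

section Counting

lemma card_filter_exists_add_div_sub_intCast_mem_Icc {N : ℕ} (hN : 0 < N) (x₀ : ℝ) {α β : ℝ}
    (hαβ : β < α + 1) :
    ((Finset.Icc 1 N).filter fun j : ℕ ↦ ∃ k : ℤ, x₀ + j / N - k ∈ Set.Icc α β).card =
      (Finset.Icc ⌈N * (α - x₀)⌉ ⌊N * (β - x₀)⌋).card := by
  have hNpos : (0 : ℝ) < N := mod_cast hN
  have hNpos' : (0 : ℤ) < N := mod_cast hN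
  have hmem (i : ℤ) : i ∈ Finset.Icc ⌈N * (α - x₀)⌉ ⌊N * (β - x₀)⌋ ↔
      x₀ + i / N ∈ Set.Icc α β := by
    rw [Finset.mem_Icc, Int.ceil_le, Int.le_floor, Set.mem_Icc, mul_comm, mul_comm (N : ℝ),
      ← le_div_iff₀ hNpos, ← div_le_iff₀ hNpos, sub_le_iff_le_add', le_sub_iff_add_le']
  have hres (i : ℤ) :
      ((((i - 1) % N).toNat + 1 : ℕ) : ℤ) = i - (i - 1) / N * N := by
    rw [Nat.cast_succ, Int.toNat_of_nonneg (Int.emod_nonneg _ hNpos'.ne')]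
    linarith [Int.emod_add_ediv_mul (i - 1) N]
  symm
  refine Finset.card_bij (fun i _ ↦ ((i - 1) % N).toNat + 1) (fun i hi ↦ ?_)
    (fun i hi i' hi' h ↦ ?_) fun j hj ↦ ?_
  · have hlt := Int.emod_lt_of_pos (i - 1) hNpos'
    refine Finset.mem_filter.2 ⟨Finset.mem_Icc.2 ⟨by omega, by omega⟩, -((i - 1) / N), ?_⟩
    convert (hmem i).1 hi using 1
    rw [← Int.cast_natCast (R := ℝ), hres]
    push_cast
    field_simp
    ring
  · obtain ⟨hα, hβ⟩ := (hmem i).1 hi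
    obtain ⟨hα', hβ'⟩ := (hmem i').1 hi'
    have hdvd : (N : ℤ) ∣ i - i' := ⟨(i - 1) / N - (i' - 1) / N, by
      linear_combination congrArg (Nat.cast : ℕ → ℤ) h - hres i + hres i'⟩
    have habs : |((i - i' : ℤ) : ℝ)| / N < 1 := by
      rw [← Nat.abs_cast N, ← abs_div, abs_lt, Int.cast_sub, sub_div]
      constructor <;> linarith
    rw [div_lt_one hNpos] at habs
    exact sub_eq_zero.1 (Int.eq_zero_of_abs_lt_dvd hdvd (mod_cast habs))
  · obtain ⟨hj, k, hk⟩ := Finset.mem_filter.1 hj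
    rw [Finset.mem_Icc] at hj
    refine ⟨j - k * N, (hmem _).2 ?_, ?_⟩
    · convert hk using 1
      push_cast
      field_simp
      ring
    · rw [show (j : ℤ) - k * N - 1 = j - 1 + -k * N by ring, Int.add_mul_emod_self_right,
        Int.emod_eq_of_lt (by omega) (by omega)]
      omega

end Counting

section FareyCounting

variable {n N : ℕ} {δ : ℝ}

lemma card_Icc_ceil_floor {α β : ℝ} (h : α ≤ β) :
    ((Finset.Icc ⌈α⌉ ⌊β⌋).card : ℝ) = β - α + sawtooth β + sawtooth (-α) := by
  have hle : ⌈α⌉ ≤ ⌊β⌋ + 1 := Int.ceil_le.2 (by push_cast; linarith [Int.lt_floor_add_one β])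
  rw [Int.card_Icc, ← Int.cast_natCast, Int.toNat_of_nonneg (by omega), sawtooth, sawtooth,
    Int.fract, Int.fract, Int.floor_neg]
  push_cast
  ring

lemma sawtooth_mul_div_eq_of_dvd {q r : ℕ} {b : ℤ} (hq : 0 < q) (hb : (q : ℤ) ∣ b * r - 1) (N : ℕ)
    (θ : ℝ) : sawtooth (N * b / q + θ) = sawtooth (N * ((r : ZMod q)⁻¹).val / q + θ) := by
  have : NeZero q := ⟨hq.ne'⟩
  have hmul : (b : ZMod q) * r = 1 := by
    have := (ZMod.intCast_zmod_eq_zero_iff_dvd _ q).2 hb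
    push_cast at this
    exact sub_eq_zero.1 this
  obtain ⟨k, hk⟩ : (q : ℤ) ∣ b - ((r : ZMod q)⁻¹).val := by
    rw [← ZMod.intCast_zmod_eq_zero_iff_dvd]
    push_cast
    rw [ZMod.natCast_zmod_val, ZMod.inv_eq_of_mul_eq_one q _ _ ((mul_comm _ _).trans hmul),
      sub_self]
  have hb_eq : (b : ℝ) = ((r : ZMod q)⁻¹).val + q * k := by
    rw [← sub_eq_iff_eq_add']
    exact_mod_cast hk
  have hq' : (q : ℝ) ≠ 0 := mod_cast hq.ne'
  have hshift : N * b / q + θ = N * ((r : ZMod q)⁻¹).val / q + θ + ((N * k : ℤ) : ℝ) := by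
    rw [hb_eq]
    push_cast
    field_simp
    ring
  rw [sawtooth, sawtooth, hshift, Int.fract_add_intCast]

/-- The error term in counting the points of an arithmetic progression of common difference `1 / N`
which lie in long gaps between fractions of level `n`. -/
noncomputable def fareySawtooth (n : ℕ) (δ : ℝ) (N : ℕ) (θ : ℝ) : ℝ :=
  ∑ p ∈ fareyPairs n δ, sawtooth (N * ((p.2 : ZMod p.1)⁻¹).val / p.1 + θ)

lemma card_Icc_fareyCore (hN : 0 < N) (x₀ : ℝ) {p : ℕ × ℕ} (hp : p ∈ fareyPairs n δ) :
    ((Finset.Icc ⌈N * (-(p.1.gcdB p.2 : ℝ) / p.1 + δ / 2 - x₀)⌉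
        ⌊N * ((p.1.gcdA p.2 : ℝ) / p.2 - δ / 2 - x₀)⌋).card : ℝ) =
      N * (1 / (p.1 * p.2) - δ) +
        sawtooth (N * ((p.1 : ZMod p.2)⁻¹).val / p.2 + -(N * (δ / 2 + x₀))) +
        sawtooth (N * ((p.2 : ZMod p.1)⁻¹).val / p.1 + -(N * (δ / 2 - x₀))) := by
  obtain ⟨⟨h1, -⟩, ⟨h2, -⟩, -, hcop, hδle⟩ := mem_fareyPairs.1 hp
  have : (0 : ℝ) < p.1 := mod_cast h1
  have : (0 : ℝ) < p.2 := mod_cast h2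
  have hbezout := gcdA_mul_add_gcdB_mul hcop
  have hlength : (p.1.gcdA p.2 : ℝ) / p.2 + p.1.gcdB p.2 / p.1 = 1 / (p.1 * p.2) := by
    have : (p.1.gcdA p.2 : ℝ) * p.1 + p.1.gcdB p.2 * p.2 = 1 := mod_cast hbezout
    rw [← this]
    field_simp
  have hδle' : δ ≤ 1 / (p.1 * p.2) := by
    rw [le_div_iff₀ (by positivity)]
    linarith
  rw [card_Icc_ceil_floor (by gcongr; rw [neg_div]; linarith),
    ← sawtooth_mul_div_eq_of_dvd h2 (b := p.1.gcdA p.2)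
      ⟨-p.1.gcdB p.2, by linear_combination hbezout⟩,
    ← sawtooth_mul_div_eq_of_dvd h1 (b := p.1.gcdB p.2)
      ⟨-p.1.gcdA p.2, by linear_combination hbezout⟩, ← hlength]
  ring_nf

lemma card_filter_isFractionFree_eq_sum (hn : 1 ≤ n) (hδ : 0 < δ) (hN : 0 < N) (x₀ : ℝ) :
    ((Finset.Icc 1 N).filter fun j : ℕ ↦ IsFractionFree n δ (x₀ + j / N)).card =
      ∑ p ∈ fareyPairs n δ, (Finset.Icc ⌈N * (-(p.1.gcdB p.2 : ℝ) / p.1 + δ / 2 - x₀)⌉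
        ⌊N * ((p.1.gcdA p.2 : ℝ) / p.2 - δ / 2 - x₀)⌋).card := by
  have hunion : (Finset.Icc 1 N).filter (fun j : ℕ ↦ IsFractionFree n δ (x₀ + j / N)) =
      (fareyPairs n δ).biUnion fun p ↦ (Finset.Icc 1 N).filter fun j : ℕ ↦
        ∃ k : ℤ, x₀ + j / N - k ∈ fareyCore δ p := by
    ext j
    simp only [isFractionFree_iff_exists_fareyCore hn hδ, Finset.mem_filter, Finset.mem_biUnion]
    tauto
  rw [hunion, Finset.card_biUnion fun p hp p' hp' hne ↦ Finset.disjoint_left.2 fun j hj hj' ↦ ?_]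
  · refine Finset.sum_congr rfl fun p hp ↦
      card_filter_exists_add_div_sub_intCast_mem_Icc hN x₀ ?_
    have hlength := (isFareyGap_of_mem_fareyPairs hp 0).length_eq
    obtain ⟨⟨h1, -⟩, ⟨h2, -⟩, -⟩ := mem_fareyPairs.1 hp
    have hle : 1 / ((p.1 : ℝ) * p.2) ≤ 1 :=
      div_le_one_of_le₀ (mod_cast Nat.mul_pos h1 h2) (by positivity)
    simp only [zero_mul, add_zero, Int.cast_neg] at hlength
    linarith
  · obtain ⟨-, k, hk⟩ := Finset.mem_filter.1 hj
    obtain ⟨-, k', hk'⟩ := Finset.mem_filter.1 hj'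
    exact hne (eq_of_mem_fareyCore hδ hp hp' hk hk')

theorem card_filter_isFractionFree (hn : 1 ≤ n) (hδ : 0 < δ) (hN : 0 < N) (x₀ : ℝ) :
    (((Finset.Icc 1 N).filter fun j : ℕ ↦ IsFractionFree n δ (x₀ + j / N)).card : ℝ) =
      N * (∑ p ∈ fareyPairs n δ, (1 / ((p.1 : ℝ) * p.2) - δ)) +
        fareySawtooth n δ N (-(N * (δ / 2 + x₀))) + fareySawtooth n δ N (-(N * (δ / 2 - x₀))) := by
  have hswap (θ : ℝ) : fareySawtooth n δ N θ =
      ∑ p ∈ fareyPairs n δ, sawtooth (N * ((p.1 : ZMod p.2)⁻¹).val / p.2 + θ) :=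
    (sum_fareyPairs_swap n δ _).symm
  rw [card_filter_isFractionFree_eq_sum hn hδ hN, Nat.cast_sum,
    Finset.sum_congr rfl fun p hp ↦ card_Icc_fareyCore hN x₀ hp, Finset.sum_add_distrib,
    Finset.sum_add_distrib, ← Finset.mul_sum, ← hswap, fareySawtooth, fareySawtooth]

end FareyCounting

section FareyError

lemma sum_fareyPairs_eq {E : Type*} [AddCommMonoid E] (n : ℕ) {δ : ℝ} (hδ : 0 < δ)
    (f : ℕ → ℕ → E) :
    ∑ p ∈ fareyPairs n δ, f p.1 p.2 = ∑ q ∈ Finset.Icc 1 n,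
      ∑ r ∈ (Finset.Ico (n - q + 1) (n - q + 1 + (min n ⌊1 / (δ * q)⌋₊ - (n - q)))).filter
        (·.Coprime q), f q r := by
  rw [fareyPairs, Finset.sum_filter, Finset.sum_product]
  refine Finset.sum_congr rfl fun q hq ↦ ?_
  rw [Finset.mem_Icc] at hq
  have hqpos : (0 : ℝ) < q := mod_cast hq.1
  rw [← Finset.sum_filter]
  refine Finset.sum_congr (Finset.ext fun r ↦ ?_) fun _ _ ↦ rfl
  have hfloor : (q : ℝ) * r * δ ≤ 1 ↔ r ≤ ⌊1 / (δ * q)⌋₊ := by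
    rw [Nat.le_floor_iff (by positivity), le_div_iff₀ (by positivity)]
    ring_nf
  simp only [Finset.mem_filter, Finset.mem_Icc, Finset.mem_Ico, hfloor]
  omega

lemma exists_forall_norm_sum_fareyPairs_fourierChar_le (M : ℝ) :
    ∃ K : ℝ, ∀ (m n : ℕ) (δ : ℝ), 0 < m → m ≤ M * n ^ 2 → 0 < δ →
      ‖∑ p ∈ fareyPairs n δ, (𝐞 (m * ((p.2 : ZMod p.1)⁻¹).val / p.1) : ℂ)‖ ≤
        K * (n : ℝ) ^ (15 / 8 : ℝ) := by
  obtain ⟨K, hK⟩ := exists_forall_sum_norm_sum_fourierChar_inv_le M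
  refine ⟨K, fun m n δ hm hmn hδ ↦ ?_⟩
  rw [sum_fareyPairs_eq n hδ fun q r ↦ (𝐞 (m * ((r : ZMod q)⁻¹).val / q) : ℂ)]
  exact (norm_sum_le _ _).trans (hK m n _ _ hm hmn fun q ↦ by omega)

section Limit

variable {α : Type*} {l : Filter α} {n N : α → ℕ} {δ : α → ℝ}

lemma tendsto_norm_sum_fareyPairs_fourierChar_div (hδ : ∀ k, 0 < δ k) (hN : ∀ k, 0 < N k)
    (hn : Tendsto n l atTop) {K : ℝ} (hK : 0 < K) (hnN : ∀ k, (n k : ℝ) ^ 2 ≤ K * N k)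
    {h : ℕ} (hh : h ≠ 0) :
    Tendsto (fun k ↦ ‖∑ p ∈ fareyPairs (n k) (δ k),
      (𝐞 (h * (N k * ((p.2 : ZMod p.1)⁻¹).val / p.1)) : ℂ)‖ / (K * N k)) l (𝓝 0) := by
  rw [Metric.tendsto_nhds]
  intro ε hε
  obtain ⟨A, hA⟩ := exists_forall_norm_sum_fareyPairs_fourierChar_le (h / (K * ε))
  have hdecay : Tendsto (fun k ↦ A * (n k : ℝ) ^ (-(1 / 8) : ℝ)) l (𝓝 0) := by
    simpa using ((tendsto_rpow_neg_atTop (by norm_num : (0 : ℝ) < 1 / 8)).comp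
      (tendsto_natCast_atTop_atTop.comp hn)).const_mul A
  filter_upwards [hdecay.eventually_lt_const hε, hn.eventually_gt_atTop 0] with k hkA hk
  have hNk : (0 : ℝ) < N k := mod_cast hN k
  have hnk : (0 : ℝ) < n k := mod_cast hk
  rw [Real.dist_0_eq_abs, abs_of_nonneg (by positivity), div_lt_iff₀ (by positivity)]
  rcases le_or_gt (K * N k * ε) (n k ^ 2) with hlarge | hsmall
  · have hm : ((h * N k : ℕ) : ℝ) ≤ h / (K * ε) * n k ^ 2 := by
      rw [div_mul_eq_mul_div, le_div_iff₀ (by positivity), Nat.cast_mul, mul_assoc]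
      refine mul_le_mul_of_nonneg_left (le_trans (le_of_eq ?_) hlarge) (Nat.cast_nonneg h)
      ring
    have hbound := hA (h * N k) (n k) (δ k) (Nat.mul_pos hh.bot_lt (hN k)) hm (hδ k)
    simp only [Nat.cast_mul, mul_assoc, mul_div_assoc] at hbound ⊢
    calc _ ≤ A * (n k : ℝ) ^ (15 / 8 : ℝ) := hbound
      _ = A * (n k : ℝ) ^ (-(1 / 8) : ℝ) * n k ^ 2 := by
        rw [mul_assoc, ← Real.rpow_natCast, ← Real.rpow_add hnk]
        norm_num
      _ < ε * n k ^ 2 := by gcongr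
      _ ≤ ε * (K * N k) := by gcongr; exact hnN k
  · calc ‖∑ p ∈ fareyPairs (n k) (δ k), (𝐞 (h * (N k * ((p.2 : ZMod p.1)⁻¹).val / p.1)) : ℂ)‖
        ≤ (fareyPairs (n k) (δ k)).card := by
          simpa using norm_sum_le_of_le (fareyPairs (n k) (δ k))
            fun p _ ↦ (Circle.norm_coe (𝐞 (h * (N k * ((p.2 : ZMod p.1)⁻¹).val / p.1)))).le
      _ ≤ (n k : ℝ) ^ 2 := card_fareyPairs_le _ _
      _ < ε * (K * N k) := by rwa [mul_comm ε]

theorem tendsto_fareySawtooth_div (hδ : ∀ k, 0 < δ k) (hN : ∀ k, 0 < N k)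
    (hn : Tendsto n l atTop) {K : ℝ} (hK : 0 < K) (hnN : ∀ k, (n k : ℝ) ^ 2 ≤ K * N k)
    (θ : α → ℝ) :
    Tendsto (fun k ↦ fareySawtooth (n k) (δ k) (N k) (θ k) / N k) l (𝓝 0) := by
  have := tendsto_sum_sawtooth_div (fun k ↦ (card_fareyPairs_le (n k) (δ k)).trans (hnN k))
    (fun h hh ↦ tendsto_norm_sum_fareyPairs_fourierChar_div hδ hN hn hK hnN hh) θ
  refine (mul_zero K ▸ this.const_mul K).congr fun k ↦ ?_
  rw [fareySawtooth, mul_div_assoc', mul_div_mul_left _ _ hK.ne']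

end Limit

end FareyError

section PrimitiveLatticePoints

variable {s : Set (ℝ × ℝ)} {n d : ℕ}

/-- The lattice points `p` with coordinates in `[1, n]` such that `p / n ∈ s`; these are all the
points of the rescaled integer lattice in `s` when `s` lies in the unit square `(0, 1]²`. -/
noncomputable def latticePoints (s : Set (ℝ × ℝ)) (n : ℕ) : Finset (ℕ × ℕ) :=
  {p ∈ Finset.Icc 1 n ×ˢ Finset.Icc 1 n | ((p.1 / n, p.2 / n) : ℝ × ℝ) ∈ s}

lemma mem_latticePoints {p : ℕ × ℕ} : p ∈ latticePoints s n ↔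
    ((0 < p.1 ∧ p.1 ≤ n) ∧ 0 < p.2 ∧ p.2 ≤ n) ∧ ((p.1 / n, p.2 / n) : ℝ × ℝ) ∈ s := by
  simp [latticePoints, Nat.one_le_iff_ne_zero, Nat.pos_iff_ne_zero]

lemma exists_nat_eq_div_of_mem_range {x : ℝ} (hn : 0 < n) (hx : x ∈ Set.Ioc 0 1)
    (hnx : (n : ℝ) * x ∈ Set.range (algebraMap ℤ ℝ)) : ∃ a : ℕ, (0 < a ∧ a ≤ n) ∧ a / n = x := by
  have hn' : (0 : ℝ) < n := Nat.cast_pos.2 hn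
  obtain ⟨z, hz⟩ := hnx
  rw [eq_intCast] at hz
  have hz_pos : 0 < z := by exact_mod_cast hz ▸ mul_pos hn' hx.1
  lift z to ℕ using hz_pos.le
  refine ⟨z, ⟨by exact_mod_cast hz_pos, ?_⟩, ?_⟩
  · exact_mod_cast hz.trans_le (mul_le_of_le_one_right hn'.le hx.2)
  · rw [div_eq_iff hn'.ne', mul_comm, ← hz, Int.cast_natCast]

open Pointwise in
lemma natCard_inter_smul_span_eq (hs : s ⊆ Set.Ioc 0 1 ×ˢ Set.Ioc 0 1) (hn : 0 < n) :
    Nat.card ↑(MeasurableEquiv.finTwoArrow ⁻¹' s ∩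
      (n : ℝ)⁻¹ • (Submodule.span ℤ (Set.range (Pi.basisFun ℝ (Fin 2))))) =
      (latticePoints s n).card := by
  have : NeZero n := ⟨hn.ne'⟩
  have hn' : (n : ℝ) ≠ 0 := Nat.cast_ne_zero.2 hn.ne'
  have hinj : Function.Injective fun p : ℕ × ℕ ↦ (![p.1 / n, p.2 / n] : Fin 2 → ℝ) := by
    intro p q hpq
    have h₀ := congrFun hpq 0
    have h₁ := congrFun hpq 1
    simp only [Matrix.cons_val_zero, Matrix.cons_val_one, div_left_inj' hn', Nat.cast_inj]
      at h₀ h₁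
    exact Prod.ext h₀ h₁
  rw [Nat.card_coe_set_eq, ← Set.ncard_coe_finset, ← Set.ncard_image_of_injective _ hinj]
  congr 1
  ext v
  constructor
  · rintro ⟨hv, hvL⟩
    have hcoord := BoxIntegral.unitPartition.mem_smul_span_iff.1 hvL
    obtain ⟨a, ha, hav⟩ := exists_nat_eq_div_of_mem_range hn (hs hv).1 (hcoord 0)
    obtain ⟨b, hb, hbv⟩ := exists_nat_eq_div_of_mem_range hn (hs hv).2 (hcoord 1)
    refine ⟨(a, b), mem_latticePoints.2 ⟨⟨ha, hb⟩, ?_⟩, ?_⟩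
    · rw [hav, hbv]
      exact hv
    · ext i
      fin_cases i
      exacts [hav, hbv]
  · rintro ⟨p, hp, rfl⟩
    refine ⟨(mem_latticePoints.1 hp).2, BoxIntegral.unitPartition.mem_smul_span_iff.2 fun i ↦ ?_⟩
    fin_cases i
    · exact ⟨p.1, by simp [mul_div_cancel₀ _ hn']⟩
    · exact ⟨p.2, by simp [mul_div_cancel₀ _ hn']⟩

lemma tendsto_card_latticePoints_div (hs : s ⊆ Set.Ioc 0 1 ×ˢ Set.Ioc 0 1)
    (hmeas : MeasurableSet s) (hfrontier : volume (frontier s) = 0) :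
    Tendsto (fun n : ℕ ↦ ((latticePoints s n).card : ℝ) / n ^ 2) atTop (𝓝 (volume.real s)) := by
  have hpres := volume_preserving_finTwoArrow ℝ
  have hbdd : Bornology.IsBounded (MeasurableEquiv.finTwoArrow ⁻¹' s : Set (Fin 2 → ℝ)) := by
    refine (Metric.isBounded_Icc (0 : Fin 2 → ℝ) 1).subset fun v hv ↦ ?_
    have hv₀ := (hs hv).1
    have hv₁ := (hs hv).2
    refine ⟨fun i ↦ ?_, fun i ↦ ?_⟩ <;> fin_cases i
    exacts [hv₀.1.le, hv₁.1.le, hv₀.2, hv₁.2]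
  have hfrontier' :
      volume (frontier (MeasurableEquiv.finTwoArrow ⁻¹' s : Set (Fin 2 → ℝ))) = 0 := by
    have hpre := (ContinuousLinearEquiv.finTwoArrow ℝ ℝ).toHomeomorph.preimage_frontier s
    change volume (frontier ((ContinuousLinearEquiv.finTwoArrow ℝ ℝ).toHomeomorph ⁻¹' s)) = 0
    rw [← hpre]
    exact (hpres.measure_preimage_equiv _).trans hfrontier
  have hlim := tendsto_card_div_pow_atTop_volume _ hbdd (hpres.measurable hmeas) hfrontier'
  rw [measureReal_def, hpres.measure_preimage_equiv, Fintype.card_fin] at hlim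
  refine hlim.congr' ?_
  filter_upwards [eventually_gt_atTop 0] with n hn
  rw [natCard_inter_smul_span_eq hs hn]

lemma card_filter_dvd_latticePoints (hs : s ⊆ Set.Ioc 0 1 ×ˢ Set.Ioc 0 1) (hd : 0 < d) :
    {p ∈ latticePoints s n | d ∣ p.1 ∧ d ∣ p.2}.card =
      (latticePoints ((fun z ↦ (d : ℝ) • z) ⁻¹' s) n).card := by
  symm
  refine Finset.card_bij (fun p _ ↦ (d * p.1, d * p.2)) (fun p hp ↦ ?_) (fun p _ q _ hpq ↦ ?_) ?_
  · obtain ⟨⟨⟨h₁, h₁'⟩, h₂, _⟩, hmem⟩ := mem_latticePoints.1 hp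
    have hmem' : (((d * p.1 : ℕ) / n, (d * p.2 : ℕ) / n) : ℝ × ℝ) ∈ s := by
      simpa [mul_div_assoc] using hmem
    have hn : (0 : ℝ) < n := by exact_mod_cast h₁.trans_le h₁'
    refine Finset.mem_filter.2 ⟨mem_latticePoints.2
      ⟨⟨⟨Nat.mul_pos hd h₁, ?_⟩, Nat.mul_pos hd h₂, ?_⟩, hmem'⟩, dvd_mul_right _ _,
        dvd_mul_right _ _⟩
    · exact_mod_cast (div_le_one hn).1 (hs hmem').1.2
    · exact_mod_cast (div_le_one hn).1 (hs hmem').2.2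
  · rw [Prod.mk.injEq] at hpq
    exact Prod.ext (Nat.eq_of_mul_eq_mul_left hd hpq.1) (Nat.eq_of_mul_eq_mul_left hd hpq.2)
  · rintro ⟨_, _⟩ hp
    obtain ⟨hp, ⟨a, rfl⟩, b, rfl⟩ := Finset.mem_filter.1 hp
    obtain ⟨⟨⟨ha, ha'⟩, hb, hb'⟩, hmem⟩ := mem_latticePoints.1 hp
    refine ⟨(a, b), mem_latticePoints.2 ⟨⟨⟨Nat.pos_of_mul_pos_left ha,
      (Nat.le_mul_of_pos_left a hd).trans ha'⟩, Nat.pos_of_mul_pos_left hb,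
      (Nat.le_mul_of_pos_left b hd).trans hb'⟩, ?_⟩, rfl⟩
    simpa [mul_div_assoc] using hmem

lemma sum_moebius_dvd_eq_ite_coprime {a b : ℕ} (ha : 0 < a) (han : a ≤ n) :
    ∑ d ∈ Finset.range (n + 1) with d ∣ a ∧ d ∣ b, ArithmeticFunction.moebius d =
      if a.Coprime b then 1 else 0 := by
  have hdivisors : {d ∈ Finset.range (n + 1) | d ∣ a ∧ d ∣ b} = (a.gcd b).divisors := by
    ext d
    simp only [Finset.mem_filter, Finset.mem_range, Nat.mem_divisors, Nat.dvd_gcd_iff]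
    exact ⟨fun h ↦ ⟨h.2, (Nat.gcd_pos_of_pos_left b ha).ne'⟩,
      fun h ↦ ⟨Nat.lt_succ_of_le ((Nat.le_of_dvd ha h.1.1).trans han), h.1⟩⟩
  rw [hdivisors, ← ArithmeticFunction.coe_mul_zeta_apply,
    ArithmeticFunction.moebius_mul_coe_zeta, ArithmeticFunction.one_apply]

lemma card_filter_coprime_latticePoints (hs : s ⊆ Set.Ioc 0 1 ×ˢ Set.Ioc 0 1) :
    (({p ∈ latticePoints s n | p.1.Coprime p.2}.card : ℕ) : ℝ) =
      ∑ d ∈ Finset.range (n + 1), (ArithmeticFunction.moebius d : ℝ) *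
        (latticePoints ((fun z ↦ (d : ℝ) • z) ⁻¹' s) n).card := by
  suffices h : (({p ∈ latticePoints s n | p.1.Coprime p.2}.card : ℕ) : ℤ) =
      ∑ d ∈ Finset.range (n + 1), ArithmeticFunction.moebius d *
        (latticePoints ((fun z ↦ (d : ℝ) • z) ⁻¹' s) n).card by
    exact_mod_cast congrArg ((↑) : ℤ → ℝ) h
  calc (({p ∈ latticePoints s n | p.1.Coprime p.2}.card : ℕ) : ℤ)
      = ∑ p ∈ latticePoints s n, ∑ d ∈ Finset.range (n + 1),
          if d ∣ p.1 ∧ d ∣ p.2 then ArithmeticFunction.moebius d else 0 := by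
        rw [Finset.card_filter, Nat.cast_sum]
        refine Finset.sum_congr rfl fun p hp ↦ ?_
        obtain ⟨h, hn⟩ := (mem_latticePoints.1 hp).1.1
        rw [← Finset.sum_filter, sum_moebius_dvd_eq_ite_coprime h hn]
        simp
    _ = ∑ d ∈ Finset.range (n + 1), ArithmeticFunction.moebius d *
          (latticePoints ((fun z ↦ (d : ℝ) • z) ⁻¹' s) n).card := by
        rw [Finset.sum_comm]
        refine Finset.sum_congr rfl fun d _ ↦ ?_
        rcases d.eq_zero_or_pos with rfl | hd
        · simp
        · rw [← Finset.sum_filter, Finset.sum_const, card_filter_dvd_latticePoints hs hd,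
            nsmul_eq_mul, mul_comm]

lemma card_latticePoints_preimage_smul_le (hs : s ⊆ Set.Ioc 0 1 ×ˢ Set.Ioc 0 1) (hd : 0 < d) :
    ((latticePoints ((fun z ↦ (d : ℝ) • z) ⁻¹' s) n).card : ℝ) ≤ n ^ 2 * (1 / d ^ 2) := by
  have hsub : latticePoints ((fun z ↦ (d : ℝ) • z) ⁻¹' s) n ⊆
      Finset.Icc 1 (n / d) ×ˢ Finset.Icc 1 (n / d) := by
    intro p hp
    obtain ⟨⟨⟨h₁, h₁'⟩, h₂, _⟩, hmem⟩ := mem_latticePoints.1 hp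
    have hn : (0 : ℝ) < n := by exact_mod_cast h₁.trans_le h₁'
    have hle : ∀ {a : ℕ}, (d : ℝ) * (a / n) ≤ 1 → a ≤ n / d := by
      intro a ha
      rw [← mul_div_assoc, div_le_one hn] at ha
      rw [Nat.le_div_iff_mul_le hd, mul_comm]
      exact_mod_cast ha
    simp only [Finset.mem_product, Finset.mem_Icc]
    exact ⟨⟨h₁, hle (hs hmem).1.2⟩, h₂, hle (hs hmem).2.2⟩
  have hcard := Finset.card_le_card hsub
  rw [Finset.card_product, Nat.card_Icc, Nat.add_sub_cancel, ← sq] at hcard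
  calc ((latticePoints ((fun z ↦ (d : ℝ) • z) ⁻¹' s) n).card : ℝ)
      ≤ ((n / d : ℕ) : ℝ) ^ 2 := by exact_mod_cast hcard
    _ ≤ (n / d : ℝ) ^ 2 := by gcongr; exact Nat.cast_div_le
    _ = n ^ 2 * (1 / d ^ 2) := by rw [div_pow]; ring

lemma tendsto_card_latticePoints_preimage_smul_div (hs : s ⊆ Set.Ioc 0 1 ×ˢ Set.Ioc 0 1)
    (hmeas : MeasurableSet s) (hfrontier : volume (frontier s) = 0) (hd : 0 < d) :
    Tendsto (fun n : ℕ ↦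
        ((latticePoints ((fun z ↦ (d : ℝ) • z) ⁻¹' s) n).card : ℝ) / n ^ 2) atTop
      (𝓝 (1 / d ^ 2 * volume.real s)) := by
  have hd' : (d : ℝ) ≠ 0 := Nat.cast_ne_zero.2 hd.ne'
  have hd₁ : (1 : ℝ) ≤ d := Nat.one_le_cast.2 hd
  have hvol : ∀ t : Set (ℝ × ℝ), volume ((fun z ↦ (d : ℝ) • z) ⁻¹' t) =
      ENNReal.ofReal (1 / d ^ 2) * volume t := by
    intro t
    rw [Measure.addHaar_preimage_smul _ hd']
    simp
  have hpre := tendsto_card_latticePoints_div (s := (fun z ↦ (d : ℝ) • z) ⁻¹' s) ?_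
    (hmeas.preimage (measurable_const_smul _)) ?_
  · rwa [measureReal_def, hvol, ENNReal.toReal_mul, ENNReal.toReal_ofReal (by positivity)] at hpre
  · intro z hz
    have hscale : ∀ {x : ℝ}, d * x ∈ Set.Ioc 0 1 → x ∈ Set.Ioc 0 1 := fun {x} hx ↦ by
      have hx_pos : 0 < x := pos_of_mul_pos_right hx.1 (zero_le_one.trans hd₁)
      exact ⟨hx_pos, (le_mul_of_one_le_left hx_pos.le hd₁).trans hx.2⟩
    exact ⟨hscale (hs hz).1, hscale (hs hz).2⟩
  · have hpre : (fun z ↦ (d : ℝ) • z) ⁻¹' frontier s = frontier ((fun z ↦ (d : ℝ) • z) ⁻¹' s) :=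
      (Homeomorph.smulOfNeZero (d : ℝ) hd').preimage_frontier s
    rw [← hpre, hvol, hfrontier, mul_zero]

lemma tsum_moebius_div_sq :
    ∑' d : ℕ, (ArithmeticFunction.moebius d : ℝ) * (1 / (d : ℝ) ^ 2) = 6 / Real.pi ^ 2 := by
  have hLSeries : LSeries (fun d ↦ (ArithmeticFunction.moebius d : ℂ)) 2 =
      ((∑' d : ℕ, (ArithmeticFunction.moebius d : ℝ) * (1 / (d : ℝ) ^ 2) : ℝ) : ℂ) := by
    rw [LSeries, Complex.ofReal_tsum]
    refine tsum_congr fun d ↦ ?_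
    rcases eq_or_ne d 0 with rfl | hd
    · simp
    · rw [LSeries.term_of_ne_zero hd]
      push_cast
      rw [Complex.cpow_ofNat, mul_one_div]
  have hprod := ArithmeticFunction.LSeries_zeta_mul_Lseries_moebius (s := 2) (by norm_num)
  rw [ArithmeticFunction.LSeries_zeta_eq_riemannZeta (by norm_num), riemannZeta_two,
    hLSeries] at hprod
  have hprod' : Real.pi ^ 2 / 6 *
      ∑' d : ℕ, (ArithmeticFunction.moebius d : ℝ) * (1 / (d : ℝ) ^ 2) = 1 := by
    exact_mod_cast hprod
  rw [eq_comm, div_eq_iff (by positivity)]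
  linarith

theorem tendsto_card_filter_coprime_latticePoints_div (hs : s ⊆ Set.Ioc 0 1 ×ˢ Set.Ioc 0 1)
    (hmeas : MeasurableSet s) (hfrontier : volume (frontier s) = 0) :
    Tendsto (fun n : ℕ ↦ (({p ∈ latticePoints s n | p.1.Coprime p.2}.card : ℕ) : ℝ) / n ^ 2) atTop
      (𝓝 (6 / Real.pi ^ 2 * volume.real s)) := by
  have hlim : Tendsto (fun n : ℕ ↦ ∑' d : ℕ, (ArithmeticFunction.moebius d : ℝ) *
      ((latticePoints ((fun z ↦ (d : ℝ) • z) ⁻¹' s) n).card / (n : ℝ) ^ 2)) atTop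
      (𝓝 (∑' d : ℕ, (ArithmeticFunction.moebius d : ℝ) *
        (1 / (d : ℝ) ^ 2 * volume.real s))) := by
    refine tendsto_tsum_of_dominated_convergence
      (Real.summable_one_div_nat_pow.2 one_lt_two) (fun d ↦ ?_) ?_
    · rcases d.eq_zero_or_pos with rfl | hd
      · simp
      · exact (tendsto_card_latticePoints_preimage_smul_div hs hmeas hfrontier hd).const_mul _
    · filter_upwards [eventually_gt_atTop 0] with n hn d
      rcases d.eq_zero_or_pos with rfl | hd
      · simp
      have hmu : |(ArithmeticFunction.moebius d : ℝ)| ≤ 1 := by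
        exact_mod_cast ArithmeticFunction.abs_moebius_le_one
      rw [norm_mul, Real.norm_eq_abs, Real.norm_of_nonneg (by positivity)]
      refine (mul_le_of_le_one_left (by positivity) hmu).trans ?_
      rw [div_le_iff₀' (by positivity)]
      exact card_latticePoints_preimage_smul_le hs hd
  simp_rw [← mul_assoc, tsum_mul_right, tsum_moebius_div_sq] at hlim
  refine hlim.congr fun n ↦ ?_
  rw [card_filter_coprime_latticePoints hs, Finset.sum_div,
    tsum_eq_sum (s := Finset.range (n + 1))]
  · exact Finset.sum_congr rfl fun d _ ↦ (mul_div_assoc _ _ _).symm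
  · intro d hd
    have hnd : n < d := by simpa using hd
    have hd_pos : 0 < d := n.zero_le.trans_lt hnd
    have hlt : ((latticePoints ((fun z ↦ (d : ℝ) • z) ⁻¹' s) n).card : ℝ) < 1 := by
      refine (card_latticePoints_preimage_smul_le hs hd_pos).trans_lt ?_
      rw [mul_one_div, div_lt_one (by positivity)]
      gcongr
    have hzero : (latticePoints ((fun z ↦ (d : ℝ) • z) ⁻¹' s) n).card = 0 :=
      Nat.lt_one_iff.1 (by exact_mod_cast hlt)
    simp [hzero]

end PrimitiveLatticePoints

section FareyRegion

variable {κ : ℝ}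

/-- The limit shape of the pairs of consecutive Farey denominators of order `n`, rescaled by
`n⁻¹`, whose product is at most `n ^ 2 / κ`. -/
def fareyRegion (κ : ℝ) : Set (ℝ × ℝ) :=
  {z | z.1 ≤ 1 ∧ z.2 ≤ 1 ∧ 1 < z.1 + z.2 ∧ z.1 * z.2 * κ ≤ 1}

lemma fareyRegion_subset : fareyRegion κ ⊆ Set.Ioc 0 1 ×ˢ Set.Ioc 0 1 :=
  fun _ hz ↦ ⟨⟨by linarith [hz.2.1, hz.2.2.1], hz.1⟩, by linarith [hz.1, hz.2.2.1], hz.2.1⟩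

lemma measurableSet_fareyRegion : MeasurableSet (fareyRegion κ) :=
  (measurableSet_le measurable_fst measurable_const).inter <|
    (measurableSet_le measurable_snd measurable_const).inter <|
    (measurableSet_lt measurable_const (measurable_fst.add measurable_snd)).inter <|
    measurableSet_le ((measurable_fst.mul measurable_snd).mul_const κ) measurable_const

lemma convex_hyperbola_interior (hκ : 0 < κ) :
    Convex ℝ {z : ℝ × ℝ | 0 < z.1 ∧ 1 < z.1 * z.2 * κ} := by
  have hinv : ConvexOn ℝ (Set.Ioi 0) fun x : ℝ ↦ κ⁻¹ • x ^ (-1 : ℤ) :=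
    (convexOn_zpow (-1)).smul (inv_nonneg.2 hκ.le)
  convert hinv.convex_strict_epigraph using 3 with z
  refine and_congr_right fun hz ↦ ?_
  rw [zpow_neg_one, smul_eq_mul, ← mul_inv, inv_lt_iff_one_lt_mul₀ (mul_pos hκ hz)]
  ring_nf

lemma volume_frontier_fareyRegion (hκ : 0 < κ) : volume (frontier (fareyRegion κ)) = 0 := by
  have hpolygon : Convex ℝ {z : ℝ × ℝ | z.1 ≤ 1 ∧ z.2 ≤ 1 ∧ 1 < z.1 + z.2} :=
    (convex_halfSpace_le (LinearMap.fst ℝ ℝ ℝ).isLinear 1).inter <|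
      (convex_halfSpace_le (LinearMap.snd ℝ ℝ ℝ).isLinear 1).inter <|
      convex_halfSpace_gt (LinearMap.fst ℝ ℝ ℝ + LinearMap.snd ℝ ℝ ℝ).isLinear 1
  have heq : fareyRegion κ = {z : ℝ × ℝ | z.1 ≤ 1 ∧ z.2 ≤ 1 ∧ 1 < z.1 + z.2} ∩
      {z : ℝ × ℝ | 0 < z.1 ∧ 1 < z.1 * z.2 * κ}ᶜ := by
    ext z
    simp only [fareyRegion, Set.mem_inter_iff, Set.mem_ofPred_eq, Set.mem_compl_iff, not_and,
      not_lt]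
    exact ⟨fun h ↦ ⟨⟨h.1, h.2.1, h.2.2.1⟩, fun _ ↦ h.2.2.2⟩,
      fun h ↦ ⟨h.1.1, h.1.2.1, h.1.2.2, h.2 (by linarith [h.1.2.1, h.1.2.2])⟩⟩
  refine measure_mono_null (heq ▸ frontier_inter_subset _ _) (measure_union_null ?_ ?_)
  · exact measure_mono_null Set.inter_subset_left (hpolygon.addHaar_frontier volume)
  · rw [frontier_compl]
    exact measure_mono_null Set.inter_subset_right
      ((convex_hyperbola_interior hκ).addHaar_frontier volume)

/-- The length of the vertical section of `fareyRegion κ` above `u ∈ (0, 1]`. -/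
noncomputable def fareyChord (κ u : ℝ) : ℝ := max 0 (1 / max 1 (κ * u) - 1 + u)

lemma fareyChord_nonneg (κ u : ℝ) : 0 ≤ fareyChord κ u := le_max_left _ _

@[fun_prop]
lemma continuous_fareyChord : Continuous (fareyChord κ) := by
  unfold fareyChord
  fun_prop (disch := intro; positivity)

lemma volume_section_fareyRegion {u : ℝ} (hu : u ∈ Set.Ioc 0 1) :
    volume (Prod.mk u ⁻¹' fareyRegion κ) = ENNReal.ofReal (fareyChord κ u) := by
  have hsection : Prod.mk u ⁻¹' fareyRegion κ = Set.Ioc (1 - u) (1 / max 1 (κ * u)) := by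
    ext v
    have hmax : 0 < max 1 (κ * u) := by positivity
    simp only [fareyRegion, Set.mem_preimage, Set.mem_ofPred_eq, Set.mem_Ioc, le_div_iff₀ hmax]
    constructor
    · rintro ⟨-, hv, hsum, hprod⟩
      refine ⟨by linarith, ?_⟩
      rw [mul_max_of_nonneg _ _ (by linarith [hu.2]), max_le_iff]
      exact ⟨by linarith, by linarith⟩
    · rintro ⟨hsum, hv⟩
      rw [mul_max_of_nonneg _ _ (by linarith [hu.2]), max_le_iff] at hv
      exact ⟨hu.2, by linarith, by linarith, by linarith⟩
  rw [hsection, Real.volume_Ioc, fareyChord, ENNReal.ofReal_max, ENNReal.ofReal_zero, zero_max,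
    sub_add]

lemma volume_real_fareyRegion (κ : ℝ) :
    volume.real (fareyRegion κ) = ∫ u in (0 : ℝ)..1, fareyChord κ u := by
  have hsection : ∀ u, volume (Prod.mk u ⁻¹' fareyRegion κ) =
      (Set.Ioc 0 1).indicator (fun u ↦ ENNReal.ofReal (fareyChord κ u)) u := by
    intro u
    by_cases hu : u ∈ Set.Ioc 0 1
    · rw [Set.indicator_of_mem hu, volume_section_fareyRegion hu]
    · rw [Set.indicator_of_notMem hu, Set.eq_empty_of_forall_notMem fun v hv ↦
        hu (fareyRegion_subset (Set.mem_preimage.1 hv)).1, measure_empty]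
  rw [measureReal_def, Measure.volume_eq_prod, Measure.prod_apply measurableSet_fareyRegion,
    lintegral_congr hsection, lintegral_indicator measurableSet_Ioc,
    ← ofReal_integral_eq_lintegral_ofReal continuous_fareyChord.integrableOn_Ioc
      (Eventually.of_forall fun u ↦ fareyChord_nonneg κ u),
    ENNReal.toReal_ofReal (integral_nonneg fun u ↦ fareyChord_nonneg κ u),
    intervalIntegral.integral_of_le zero_le_one]

lemma tendsto_card_fareyPairs_div (hκ : 0 < κ) :
    Tendsto (fun n : ℕ ↦ ((fareyPairs n (κ / n ^ 2)).card : ℝ) / n ^ 2) atTop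
      (𝓝 (6 / Real.pi ^ 2 * ∫ u in (0 : ℝ)..1, fareyChord κ u)) := by
  rw [← volume_real_fareyRegion]
  refine (tendsto_card_filter_coprime_latticePoints_div fareyRegion_subset
    measurableSet_fareyRegion (volume_frontier_fareyRegion hκ)).congr' ?_
  filter_upwards [eventually_gt_atTop 0] with n hn
  congr 3
  ext p
  have hn' : (0 : ℝ) < n := Nat.cast_pos.2 hn
  have hsum : (1 : ℝ) < p.1 / n + p.2 / n ↔ n < p.1 + p.2 := by
    rw [← add_div, one_lt_div hn']
    norm_cast
  have hprod : (p.1 / n * (p.2 / n) * κ : ℝ) = p.1 * p.2 * (κ / n ^ 2) := by field_simp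
  simp only [Finset.mem_filter, mem_latticePoints, mem_fareyPairs, fareyRegion, Set.mem_ofPred_eq,
    div_le_one hn', Nat.cast_le, hsum, hprod, Nat.coprime_comm (n := p.1)]
  tauto

end FareyRegion

section LimitingDensity

variable {κ a b : ℝ}

lemma integral_fareyChord_of_mul_le_one (hκ : 0 < κ) (hb : 0 ≤ b) (h : κ * b ≤ 1) :
    ∫ u in (0 : ℝ)..b, fareyChord κ u = b ^ 2 / 2 := by
  rw [intervalIntegral.integral_congr (g := fun u ↦ u), integral_id]
  · ring
  · intro u hu
    rw [Set.uIcc_of_le hb] at hu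
    have hu₁ : κ * u ≤ 1 := (mul_le_mul_of_nonneg_left hu.2 hκ.le).trans h
    simp [fareyChord, max_eq_left hu₁, hu.1]

lemma fareyChord_of_one_le_mul {u : ℝ} (hκ : 0 < κ) (hu : 1 ≤ κ * u) :
    fareyChord κ u = max 0 ((κ * u ^ 2 - κ * u + 1) / (κ * u)) := by
  have hu₀ : u ≠ 0 := right_ne_zero_of_mul (one_pos.trans_le hu).ne'
  rw [fareyChord, max_eq_right hu]
  congr 1
  field_simp
  ring

lemma integral_fareyChord_of_nonpos (hκ : 0 < κ) (hab : a ≤ b) (ha : 1 ≤ κ * a)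
    (h : ∀ u ∈ Set.Icc a b, κ * u ^ 2 - κ * u + 1 ≤ 0) : ∫ u in a..b, fareyChord κ u = 0 := by
  rw [intervalIntegral.integral_congr (g := fun _ ↦ 0), intervalIntegral.integral_zero]
  intro u hu
  rw [Set.uIcc_of_le hab] at hu
  have hu₁ : 1 ≤ κ * u := ha.trans (mul_le_mul_of_nonneg_left hu.1 hκ.le)
  rw [fareyChord_of_one_le_mul hκ hu₁, max_eq_left]
  exact div_nonpos_of_nonpos_of_nonneg (h u hu) (zero_le_one.trans hu₁)

lemma integral_fareyChord_of_nonneg (hκ : 0 < κ) (hab : a ≤ b) (ha : 1 ≤ κ * a)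
    (h : ∀ u ∈ Set.Icc a b, 0 ≤ κ * u ^ 2 - κ * u + 1) :
    ∫ u in a..b, fareyChord κ u =
      (Real.log b - Real.log a) / κ - (b - a) + (b ^ 2 - a ^ 2) / 2 := by
  have hderiv : ∀ u ∈ Set.uIcc a b,
      HasDerivAt (fun u ↦ Real.log u / κ - u + u ^ 2 / 2) (fareyChord κ u) u := by
    intro u hu
    rw [Set.uIcc_of_le hab] at hu
    have hu₁ : 1 ≤ κ * u := ha.trans (mul_le_mul_of_nonneg_left hu.1 hκ.le)
    have hu₀ : u ≠ 0 := right_ne_zero_of_mul (one_pos.trans_le hu₁).ne'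
    have hsum := (((Real.hasDerivAt_log hu₀).div_const κ).sub (hasDerivAt_id u)).add
      ((hasDerivAt_pow 2 u).div_const 2)
    refine hsum.congr_deriv ?_
    rw [fareyChord_of_one_le_mul hκ hu₁,
      max_eq_right (div_nonneg (h u hu) (zero_le_one.trans hu₁))]
    field_simp
    norm_num
    ring
  rw [intervalIntegral.integral_eq_sub_of_hasDerivAt hderiv
    (continuous_fareyChord.intervalIntegrable _ _)]
  ring

lemma integral_fareyChord_of_le_one (hκ : 0 < κ) (hκ₁ : κ ≤ 1) :
    ∫ u in (0 : ℝ)..1, fareyChord κ u = 1 / 2 := by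
  rw [integral_fareyChord_of_mul_le_one hκ zero_le_one (by rwa [mul_one]), one_pow]

lemma integral_fareyChord_eq_add (hκ : 0 < κ) :
    ∫ u in (0 : ℝ)..1, fareyChord κ u = (1 / κ) ^ 2 / 2 + ∫ u in (1 / κ)..1, fareyChord κ u := by
  rw [← integral_fareyChord_of_mul_le_one hκ (by positivity) (mul_one_div_cancel hκ.ne').le,
    intervalIntegral.integral_add_adjacent_intervals] <;>
  exact continuous_fareyChord.intervalIntegrable _ _

lemma integral_fareyChord_of_le_four (hκ₁ : 1 ≤ κ) (hκ₄ : κ ≤ 4) :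
    ∫ u in (0 : ℝ)..1, fareyChord κ u = Real.log κ / κ - 1 / 2 + 1 / κ := by
  have hκ : 0 < κ := one_pos.trans_le hκ₁
  rw [integral_fareyChord_eq_add hκ, integral_fareyChord_of_nonneg hκ
    ((div_le_one hκ).2 hκ₁) (mul_one_div_cancel hκ.ne').ge fun u _ ↦ ?_,
    Real.log_one, one_div, Real.log_inv]
  · field_simp
    ring
  · nlinarith [mul_nonneg hκ.le (sq_nonneg (u - 1 / 2))]

lemma mul_sq_sub_mul_add_one_eq {r : ℝ} (hκ : κ ≠ 0) (hr : r ^ 2 = 1 / 4 - 1 / κ) (u : ℝ) :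
    κ * u ^ 2 - κ * u + 1 = κ * ((u - (1 / 2 - r)) * (u - (1 / 2 + r))) := by
  linear_combination κ * hr - mul_one_div_cancel hκ

lemma integral_fareyChord_of_four_le (hκ₄ : 4 ≤ κ) :
    ∫ u in (0 : ℝ)..1, fareyChord κ u = -1 / 2 + 1 / κ + √(1 / 4 - 1 / κ) -
      2 * Real.log (1 / 2 + √(1 / 4 - 1 / κ)) / κ := by
  have hκ : 0 < κ := by linarith
  have hκ_inv : 1 / κ ≤ 1 / 4 := one_div_le_one_div_of_le four_pos hκ₄
  set r := √(1 / 4 - 1 / κ)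
  have hr_nonneg : 0 ≤ r := Real.sqrt_nonneg _
  have hr_lt : r < 1 / 2 := by
    rw [Real.sqrt_lt' one_half_pos]
    linarith [one_div_pos.2 hκ]
  have hr_sq : r ^ 2 = 1 / 4 - 1 / κ := Real.sq_sqrt (sub_nonneg.2 hκ_inv)
  have hfactor := mul_sq_sub_mul_add_one_eq hκ.ne' hr_sq
  have hroots : (1 / 2 + r) * (1 / 2 - r) = 1 / κ := by linear_combination -hr_sq
  have hleft : 1 / κ ≤ 1 / 2 - r := by rw [← hroots]; nlinarith
  have hone_le : ∀ {u}, 1 / κ ≤ u → 1 ≤ κ * u := fun hu ↦ by rwa [div_le_iff₀' hκ] at hu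
  have hlog : Real.log (1 / 2 - r) = -Real.log κ - Real.log (1 / 2 + r) := by
    rw [← Real.log_inv, ← one_div, ← hroots, Real.log_mul (by linarith) (by linarith)]
    ring
  have hint : ∀ x y, IntervalIntegrable (fareyChord κ) volume x y :=
    continuous_fareyChord.intervalIntegrable
  rw [integral_fareyChord_eq_add hκ,
    ← intervalIntegral.integral_add_adjacent_intervals (hint _ (1 / 2 + r)) (hint _ 1),
    ← intervalIntegral.integral_add_adjacent_intervals (hint _ (1 / 2 - r)) (hint _ (1 / 2 + r)),
    integral_fareyChord_of_nonneg hκ hleft (hone_le le_rfl) fun u hu ↦ ?_,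
    integral_fareyChord_of_nonpos hκ (by linarith) (hone_le hleft) fun u hu ↦ ?_,
    integral_fareyChord_of_nonneg hκ (by linarith) (hone_le (by linarith)) fun u hu ↦ ?_,
    hlog, Real.log_one, one_div κ, Real.log_inv]
  · field_simp
    ring
  · rw [hfactor]
    exact mul_nonneg hκ.le (mul_nonneg (by linarith [hu.1]) (by linarith [hu.1]))
  · rw [hfactor]
    exact mul_nonpos_of_nonneg_of_nonpos hκ.le
      (mul_nonpos_of_nonneg_of_nonpos (by linarith [hu.1]) (by linarith [hu.2]))
  · rw [hfactor]
    exact mul_nonneg hκ.le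
      (mul_nonneg_of_nonpos_of_nonpos (by linarith [hu.2]) (by linarith [hu.2]))

lemma etaLog_eq_integral_fareyChord (s : ℝ) :
    etaLog s = 2 * Real.exp (2 * s) *
      (6 / Real.pi ^ 2 * ∫ u in (0 : ℝ)..1, fareyChord (Real.exp (2 * s)) u) := by
  have hκ : 0 < Real.exp (2 * s) := Real.exp_pos _
  have hneg : Real.exp (-2 * s) = 1 / Real.exp (2 * s) := by rw [neg_mul, Real.exp_neg, one_div]
  have hfour : Real.exp (2 * Real.log 2) = 4 := by
    rw [two_mul, Real.exp_add, Real.exp_log two_pos]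
    norm_num
  rw [etaLog, hneg]
  split_ifs with h₁ h₂
  · rw [integral_fareyChord_of_le_one hκ (by rw [Real.exp_le_one_iff]; linarith)]
    ring
  · rw [integral_fareyChord_of_le_four (by rw [Real.one_le_exp_iff]; linarith)
      (by rw [← hfour, Real.exp_le_exp]; linarith), Real.log_exp]
    field_simp
    ring
  · rw [integral_fareyChord_of_four_le (by rw [← hfour, Real.exp_le_exp]; linarith)]
    field_simp
    ring

end LimitingDensity

section MainTerm

variable {n : ℕ} {δ : ℝ}

lemma fareyPairs_filter_le_subset {κ : ℝ} (hκ : 0 < κ) (n : ℕ) :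
    (fareyPairs n (κ / n ^ 2)).filter (fun p ↦ p.1 ≤ p.2) ⊆
      Finset.Icc 1 ⌊2 * n / κ⌋₊ ×ˢ Finset.Ioc (n - ⌊2 * n / κ⌋₊) n := by
  intro p hp
  obtain ⟨hp, hle⟩ := Finset.mem_filter.1 hp
  obtain ⟨⟨hp₁, hp₁n⟩, ⟨-, hp₂n⟩, hsum, -, hprod⟩ := mem_fareyPairs.1 hp
  have hn : (0 : ℝ) < n := Nat.cast_pos.2 (hp₁.trans_le hp₁n)
  have hn_le : (n : ℝ) ≤ 2 * p.2 := mod_cast (by omega : n ≤ 2 * p.2)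
  rw [mul_div_assoc', div_le_one (by positivity)] at hprod
  have hfloor : p.1 ≤ ⌊2 * n / κ⌋₊ := by
    refine Nat.le_floor ((le_div_iff₀ hκ).2 (le_of_mul_le_mul_right ?_ hn))
    calc (p.1 : ℝ) * κ * n ≤ p.1 * κ * (2 * p.2) := by gcongr
      _ = 2 * (p.1 * p.2 * κ) := by ring
      _ ≤ 2 * n * n := by linarith
  simp only [Finset.mem_product, Finset.mem_Icc, Finset.mem_Ioc]
  omega

lemma card_fareyPairs_div_sq_le {κ : ℝ} (hκ : 0 < κ) (n : ℕ) :
    ((fareyPairs n (κ / n ^ 2)).card : ℝ) / n ^ 2 ≤ 8 / κ ^ 2 := by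
  set P := fareyPairs n (κ / n ^ 2)
  set m := ⌊2 * n / κ⌋₊
  have hm : (m : ℝ) ≤ 2 * n / κ := Nat.floor_le (by positivity)
  have hhalf : ((P.filter fun p ↦ p.1 ≤ p.2).card : ℝ) ≤ m * m := by
    have hcard := Finset.card_le_card (fareyPairs_filter_le_subset hκ n)
    rw [Finset.card_product, Nat.card_Icc, Nat.card_Ioc] at hcard
    have hmul : (P.filter fun p ↦ p.1 ≤ p.2).card ≤ m * m :=
      hcard.trans (Nat.mul_le_mul (by omega) (by omega))
    exact_mod_cast hmul
  have hswap : ((P.filter fun p ↦ p.2 ≤ p.1).card : ℝ) = (P.filter fun p ↦ p.1 ≤ p.2).card := by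
    rw [← Finset.sum_boole, ← Finset.sum_boole]
    exact sum_fareyPairs_swap n _ fun p ↦ if p.1 ≤ p.2 then 1 else 0
  have hcover : (P.card : ℝ) ≤
      (P.filter fun p ↦ p.1 ≤ p.2).card + (P.filter fun p ↦ p.2 ≤ p.1).card := by
    have hunion : P ⊆ P.filter (fun p ↦ p.1 ≤ p.2) ∪ P.filter (fun p ↦ p.2 ≤ p.1) := by
      rw [← Finset.filter_or, Finset.filter_true_of_mem fun p _ ↦ le_total p.1 p.2]
    exact_mod_cast (Finset.card_le_card hunion).trans (Finset.card_union_le _ _)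
  refine div_le_of_le_mul₀ (by positivity) (by positivity) ?_
  calc (P.card : ℝ) ≤ 2 * (m * m) := by linarith
    _ ≤ 2 * (2 * n / κ * (2 * n / κ)) := by gcongr
    _ = 8 / κ ^ 2 * n ^ 2 := by ring

/-- The density whose tail integrals are the main terms of the count of fraction-free intervals,
see `sum_fareyPairs_eq_integral_fareyDensity`; it is the analogue of `etaLog` for Farey fractions
of order `n`. -/
noncomputable def fareyDensity (n : ℕ) (s : ℝ) : ℝ :=
  2 * Real.exp (2 * s) * ((fareyPairs n (Real.exp (2 * s) / n ^ 2)).card / n ^ 2)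

lemma tendsto_fareyDensity (s : ℝ) : Tendsto (fareyDensity · s) atTop (𝓝 (etaLog s)) := by
  rw [etaLog_eq_integral_fareyChord]
  exact (tendsto_card_fareyPairs_div (Real.exp_pos _)).const_mul _

lemma norm_fareyDensity_le (n : ℕ) (s : ℝ) : ‖fareyDensity n s‖ ≤ 16 * Real.exp (-2 * s) := by
  rw [fareyDensity, Real.norm_of_nonneg (by positivity)]
  calc 2 * Real.exp (2 * s) * ((fareyPairs n (Real.exp (2 * s) / n ^ 2)).card / n ^ 2)
    _ ≤ 2 * Real.exp (2 * s) * (8 / Real.exp (2 * s) ^ 2) := by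
      exact mul_le_mul_of_nonneg_left (card_fareyPairs_div_sq_le (Real.exp_pos _) n)
        (by positivity)
    _ = 16 * Real.exp (-2 * s) := by
      rw [neg_mul, Real.exp_neg]
      field_simp
      norm_num

lemma fareyPairs_eq_filter (n : ℕ) (δ : ℝ) :
    fareyPairs n δ = (fareyPairs n 0).filter fun p ↦ (p.1 : ℝ) * p.2 * δ ≤ 1 := by
  ext p
  simp only [Finset.mem_filter, mem_fareyPairs, mul_zero, zero_le_one, and_true, and_assoc]

lemma fareyDensity_eq_sum_indicator (n : ℕ) (s : ℝ) :
    fareyDensity n s = (∑ p ∈ fareyPairs n 0,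
      (Set.Iic (Real.log (n ^ 2 / (p.1 * p.2)) / 2)).indicator (fun t ↦ 2 * Real.exp (2 * t)) s) /
        n ^ 2 := by
  have hmem : ∀ p ∈ fareyPairs n 0, (p.1 : ℝ) * p.2 * (Real.exp (2 * s) / n ^ 2) ≤ 1 ↔
      s ∈ Set.Iic (Real.log (n ^ 2 / (p.1 * p.2)) / 2) := by
    intro p hp
    obtain ⟨⟨hp₁, hp₁n⟩, ⟨hp₂, -⟩, -⟩ := mem_fareyPairs.1 hp
    have hn : (0 : ℝ) < n := Nat.cast_pos.2 (hp₁.trans_le hp₁n)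
    rw [mul_div_assoc', div_le_one (by positivity), Set.mem_Iic, le_div_iff₀' two_pos,
      Real.le_log_iff_exp_le (by positivity), le_div_iff₀' (by positivity)]
  rw [fareyDensity, fareyPairs_eq_filter, Finset.filter_congr hmem, ← Finset.sum_boole,
    mul_div_assoc', Finset.mul_sum]
  simp only [Set.indicator_apply, mul_ite, mul_one, mul_zero]

lemma measurable_fareyDensity (n : ℕ) : Measurable (fareyDensity n) := by
  rw [funext (fareyDensity_eq_sum_indicator n)]
  exact (Finset.measurable_fun_sum _ fun p _ ↦
    Measurable.indicator (by fun_prop) measurableSet_Iic).div_const _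

lemma integrable_indicator_Iic_exp (b : ℝ) :
    Integrable ((Set.Iic b).indicator fun t ↦ 2 * Real.exp (2 * t)) :=
  IntegrableOn.integrable_indicator ((integrableOn_exp_mul_Iic two_pos b).const_mul 2)
    measurableSet_Iic

lemma setIntegral_Ioi_indicator_Iic_exp (σ b : ℝ) :
    ∫ s in Set.Ioi σ, (Set.Iic b).indicator (fun t ↦ 2 * Real.exp (2 * t)) s =
      max (Real.exp (2 * b) - Real.exp (2 * σ)) 0 := by
  rw [setIntegral_indicator measurableSet_Iic, Set.Ioi_inter_Iic]
  rcases le_total σ b with h | h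
  · rw [← intervalIntegral.integral_of_le h, intervalIntegral.integral_const_mul,
      intervalIntegral.mul_integral_comp_mul_left, integral_exp, max_eq_left]
    exact sub_nonneg.2 (Real.exp_le_exp.2 (by linarith))
  · rw [Set.Ioc_eq_empty h.not_gt, setIntegral_empty, max_eq_right]
    exact sub_nonpos.2 (Real.exp_le_exp.2 (by linarith))

lemma sum_fareyPairs_eq_integral_fareyDensity (hn : 0 < n) (hδ : 0 < δ) :
    ∑ p ∈ fareyPairs n δ, (1 / ((p.1 : ℝ) * p.2) - δ) =
      ∫ s in Set.Ioi (Real.log (δ * n ^ 2) / 2), fareyDensity n s := by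
  have _ : (0 : ℝ) < n := Nat.cast_pos.2 hn
  simp only [fareyDensity_eq_sum_indicator, integral_div]
  rw [integral_finsetSum _ fun p _ ↦ (integrable_indicator_Iic_exp _).integrableOn,
    fareyPairs_eq_filter, Finset.sum_filter, Finset.sum_div]
  refine Finset.sum_congr rfl fun p hp ↦ ?_
  obtain ⟨⟨hp₁, -⟩, ⟨hp₂, -⟩, -⟩ := mem_fareyPairs.1 hp
  have hD : (0 : ℝ) < p.1 * p.2 := by positivity
  rw [setIntegral_Ioi_indicator_Iic_exp, mul_div_cancel₀ _ two_ne_zero,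
    mul_div_cancel₀ _ two_ne_zero, Real.exp_log (by positivity), Real.exp_log (by positivity)]
  have hfactor : (n : ℝ) ^ 2 / (p.1 * p.2) - δ * n ^ 2 = n ^ 2 * (1 / (p.1 * p.2) - δ) := by ring
  split_ifs with h
  · rw [max_eq_left, hfactor]
    · field_simp
    · rw [hfactor]
      exact mul_nonneg (by positivity) (sub_nonneg.2 ((le_div_iff₀' hD).2 h))
  · rw [max_eq_right, zero_div]
    rw [hfactor]
    exact mul_nonpos_of_nonneg_of_nonpos (by positivity)
      (sub_nonpos.2 ((div_le_iff₀' hD).2 (not_le.1 h).le))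

variable {ι : Type*} {l : Filter ι} {L : ℝ}

lemma tendsto_setIntegral_Ioi_of_dominated [l.IsCountablyGenerated] {E : Type*}
    [NormedAddCommGroup E] [NormedSpace ℝ E] {F : ι → ℝ → E} {f : ℝ → E} {σ : ι → ℝ} {c : ℝ}
    {g : ℝ → ℝ} (hF : ∀ᶠ k in l, AEStronglyMeasurable (F k))
    (hFg : ∀ᶠ k in l, ∀ s, ‖F k s‖ ≤ g s) (hg : IntegrableOn g (Set.Ioi c)) (hc : c < L)
    (hσ : Tendsto σ l (𝓝 L)) (hlim : ∀ s, Tendsto (F · s) l (𝓝 (f s))) :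
    Tendsto (fun k ↦ ∫ s in Set.Ioi (σ k), F k s) l (𝓝 (∫ s in Set.Ioi L, f s)) := by
  simp only [← integral_indicator measurableSet_Ioi]
  refine tendsto_integral_filter_of_dominated_convergence ((Set.Ioi c).indicator g)
    (hF.mono fun k hk ↦ hk.indicator measurableSet_Ioi) ?_
    (hg.integrable_indicator measurableSet_Ioi) ?_
  · filter_upwards [hFg, hσ.eventually_const_lt hc] with k hk hck
    refine .of_forall fun s ↦ ?_
    rw [norm_indicator_eq_indicator_norm]
    exact (Set.indicator_le_indicator_of_subset (Set.Ioi_subset_Ioi hck.le)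
      (fun _ ↦ norm_nonneg _) s).trans (Set.indicator_le_indicator (hk s))
  · filter_upwards [compl_mem_ae_iff.2 (measure_singleton L)] with s hs
    rcases lt_or_gt_of_ne hs with hsL | hsL
    · rw [Set.indicator_of_notMem (Set.notMem_Ioi.2 hsL.le)]
      refine tendsto_const_nhds.congr' ?_
      filter_upwards [hσ.eventually_const_lt hsL] with k hk
      rw [Set.indicator_of_notMem (Set.notMem_Ioi.2 hk.le)]
    · rw [Set.indicator_of_mem (Set.mem_Ioi.2 hsL)]
      refine (hlim s).congr' ?_
      filter_upwards [hσ.eventually_lt_const hsL] with k hk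
      rw [Set.indicator_of_mem (Set.mem_Ioi.2 hk)]

lemma tendsto_sum_fareyPairs [l.IsCountablyGenerated] {n : ι → ℕ} {δ : ι → ℝ}
    (hn : Tendsto n l atTop) (hδn : Tendsto (fun k ↦ δ k * n k ^ 2) l (𝓝 (Real.exp (2 * L)))) :
    Tendsto (fun k ↦ ∑ p ∈ fareyPairs (n k) (δ k), (1 / ((p.1 : ℝ) * p.2) - δ k)) l
      (𝓝 (∫ s in Set.Ioi L, etaLog s)) := by
  have hσ : Tendsto (fun k ↦ Real.log (δ k * n k ^ 2) / 2) l (𝓝 L) := by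
    have hlog := (hδn.log (Real.exp_pos _).ne').div_const 2
    rwa [Real.log_exp, mul_div_cancel_left₀ _ two_ne_zero] at hlog
  have hint : IntegrableOn (fun s ↦ 16 * Real.exp (-2 * s)) (Set.Ioi (L - 1)) :=
    (integrableOn_exp_mul_Ioi (by norm_num) _).const_mul 16
  refine (tendsto_setIntegral_Ioi_of_dominated (F := fun k ↦ fareyDensity (n k))
    (.of_forall fun k ↦ (measurable_fareyDensity _).aestronglyMeasurable)
    (.of_forall fun k ↦ norm_fareyDensity_le _) hint (sub_one_lt L) hσ
    fun s ↦ (tendsto_fareyDensity s).comp hn).congr' ?_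
  filter_upwards [hn.eventually_gt_atTop 0, hδn.eventually_const_lt (Real.exp_pos _)] with k hk hδk
  exact (sum_fareyPairs_eq_integral_fareyDensity hk (pos_of_mul_pos_left hδk (by positivity))).symm

end MainTerm

section SmallestDenominator

variable {ι : Type*} {l : Filter ι} {L a x : ℝ}

lemma qmin_mem {δ : ℝ} (hδ : 0 < δ) (x : ℝ) :
    0 < qmin x δ ∧ ∃ p : ℤ, x - δ / 2 < (p : ℝ) / qmin x δ ∧ (p : ℝ) / qmin x δ < x + δ / 2 := by
  refine Nat.sInf_mem
    (s := {q : ℕ | 0 < q ∧ ∃ p : ℤ, x - δ / 2 < (p : ℝ) / q ∧ (p : ℝ) / q < x + δ / 2}) ?_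
  obtain ⟨r, hleft, hright⟩ := exists_rat_btwn (show x - δ / 2 < x + δ / 2 by linarith)
  rw [Rat.cast_def] at hleft hright
  exact ⟨r.den, r.den_pos, r.num, hleft, hright⟩

lemma lt_qmin_iff_isFractionFree {δ : ℝ} (hδ : 0 < δ) {n : ℕ} :
    n < qmin x δ ↔ IsFractionFree n δ x := by
  constructor
  · intro hlt r p hr hrn hp
    exact (hlt.trans_le (Nat.sInf_le ⟨hr, p, hp⟩)).not_ge hrn
  · intro hfree
    obtain ⟨hpos, p, hp⟩ := qmin_mem hδ x
    exact not_le.1 fun hle ↦ hfree _ p hpos hle hp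

lemma lt_log_qmin_iff_isFractionFree {δ : ℝ} (hδ : 0 < δ) :
    L - 1 / 2 * Real.log δ < Real.log (qmin x δ) ↔
      IsFractionFree ⌊Real.exp L / √δ⌋₊ δ x := by
  have hqmin : (0 : ℝ) < qmin x δ := Nat.cast_pos.2 (qmin_mem hδ x).1
  have hexp : Real.exp (L - 1 / 2 * Real.log δ) = Real.exp L / √δ := by
    rw [Real.exp_sub, one_div_mul_eq_div, Real.exp_half, Real.exp_log hδ]
  rw [Real.lt_log_iff_exp_lt hqmin, hexp, ← Nat.floor_lt (by positivity),
    lt_qmin_iff_isFractionFree hδ]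

lemma tendsto_div_sqrt_atTop {δ : ι → ℝ} (hδ : Tendsto δ l (𝓝[>] 0)) (ha : 0 < a) :
    Tendsto (fun k ↦ a / √(δ k)) l atTop := by
  simp only [div_eq_mul_inv, ← Real.sqrt_inv]
  exact (Real.tendsto_sqrt_atTop.comp (tendsto_inv_nhdsGT_zero.comp hδ)).const_mul_atTop ha

lemma tendsto_mul_floor_div_sqrt_sq {δ : ι → ℝ} (hδ : Tendsto δ l (𝓝[>] 0)) (ha : 0 < a) :
    Tendsto (fun k ↦ δ k * (⌊a / √(δ k)⌋₊ : ℝ) ^ 2) l (𝓝 (a ^ 2)) := by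
  have hratio := (tendsto_nat_floor_div_atTop (R := ℝ)).comp (tendsto_div_sqrt_atTop hδ ha)
  have hlim := (hratio.pow 2).const_mul (a ^ 2)
  rw [one_pow, mul_one] at hlim
  refine hlim.congr' ?_
  filter_upwards [hδ.eventually self_mem_nhdsWithin] with k hk
  rw [Function.comp_apply, div_pow, div_pow, Real.sq_sqrt (le_of_lt hk)]
  field_simp

lemma sq_floor_div_sqrt_le {δ c N : ℝ} (ha : 0 ≤ a) (hδ : 0 < δ) (hc : 0 < c)
    (hN : c ≤ N * δ) : (⌊a / √δ⌋₊ : ℝ) ^ 2 ≤ a ^ 2 / c * N := by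
  calc (⌊a / √δ⌋₊ : ℝ) ^ 2 ≤ (a / √δ) ^ 2 := by
        gcongr
        exact Nat.floor_le (by positivity)
    _ = a ^ 2 * (1 / δ) := by rw [div_pow, Real.sq_sqrt hδ.le, mul_one_div]
    _ ≤ a ^ 2 * (N / c) := by
        gcongr ?_ * ?_
        rwa [div_le_div_iff₀ hδ hc, one_mul]
    _ = a ^ 2 / c * N := by ring

end SmallestDenominator

theorem smallest_denominator_log_limit_law_discrete_general {ι : Type*} {l : Filter ι}
    [l.IsCountablyGenerated] (x₀ : ι → ℝ) (L : ℝ) {δ : ι → ℝ} (hδ : Tendsto δ l (𝓝 0))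
    {N : ι → ℕ} {c : ℝ} (hc : 0 < c) (hNδ : ∀ k, c ≤ N k * δ k) :
    Tendsto (fun k ↦ (((Finset.Icc 1 (N k)).filter fun j : ℕ ↦ L - 1 / 2 * Real.log (δ k) <
      Real.log (qmin (x₀ k + j / N k) (δ k))).card : ℝ) / N k) l
      (𝓝 (∫ s in Set.Ioi L, etaLog s)) := by
  have hδpos : ∀ k, 0 < δ k := fun k ↦ pos_of_mul_pos_right (hc.trans_le (hNδ k)) (by positivity)
  have hNpos : ∀ k, 0 < N k := fun k ↦ Nat.cast_pos.1 <|
    pos_of_mul_pos_left (hc.trans_le (hNδ k)) (hδpos k).le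
  have hδ' : Tendsto δ l (𝓝[>] 0) := tendsto_nhdsWithin_iff.2 ⟨hδ, .of_forall hδpos⟩
  set n : ι → ℕ := fun k ↦ ⌊Real.exp L / √(δ k)⌋₊
  have hn : Tendsto n l atTop :=
    tendsto_nat_floor_atTop.comp (tendsto_div_sqrt_atTop hδ' (Real.exp_pos L))
  have hnN : ∀ k, (n k : ℝ) ^ 2 ≤ Real.exp L ^ 2 / c * N k := fun k ↦
    sq_floor_div_sqrt_le (Real.exp_pos L).le (hδpos k) hc (hNδ k)
  have hmain := tendsto_sum_fareyPairs hn (L := L) <| by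
    simpa only [two_mul, Real.exp_add, ← sq] using
      tendsto_mul_floor_div_sqrt_sq hδ' (Real.exp_pos L)
  have herror := fun θ ↦ tendsto_fareySawtooth_div hδpos hNpos hn (by positivity) hnN θ
  have hlim := (hmain.add (herror fun k ↦ -(N k * (δ k / 2 + x₀ k)))).add
    (herror fun k ↦ -(N k * (δ k / 2 - x₀ k)))
  rw [add_zero, add_zero] at hlim
  refine hlim.congr' ?_
  filter_upwards [hn.eventually_ge_atTop 1] with k hk
  have hN : (N k : ℝ) ≠ 0 := mod_cast (hNpos k).ne'
  simp only [lt_log_qmin_iff_isFractionFree (hδpos k)]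
  rw [card_filter_isFractionFree hk (hδpos k) (hNpos k)]
  field_simp

theorem smallest_denominator_log_limit_law_discrete
    (x₀ : ℝ) (hx₀ : x₀ ∈ Set.Icc (0 : ℝ) 1) (L : ℝ)
    (δ : ℕ → ℝ) (hδpos : ∀ k, 0 < δ k) (hδ : Tendsto δ atTop (nhds 0))
    (N : ℕ → ℕ) (hNpos : ∀ k, 0 < N k) (hN : Tendsto N atTop atTop)
    (c : ℝ) (hc : 0 < c) (hNδ : ∀ k, c ≤ (N k : ℝ) * δ k) :
    Tendsto (fun k : ℕ =>
        (((Finset.Icc 1 (N k)).filter (fun j : ℕ =>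
          L - (1 / 2) * Real.log (δ k) <
            Real.log (qmin (x₀ + (j : ℝ) / (N k : ℝ)) (δ k)))).card : ℝ) / (N k : ℝ))
      atTop (nhds (∫ s in Set.Ioi L, etaLog s)) :=
  smallest_denominator_log_limit_law_discrete_general (fun _ ↦ x₀) L hδ hc hNδ
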